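/- arXiv:1609.03049 — 2 statements merged into one kernel-verified Lean document; each statement's English description precedes it below -/
import Mathlib

section
/- The dual F_7^* of the Fano matroid is an excluded minor of \overline{BL}; in particular, there is no graph G with L(G) isomorphic to F_7^*. -/
/-!
Label the points of the Fano plane by `Fin 7` so that the lines are `{i, i + 1, i + 3}`. The circuits
of the dual are then the seven line complements `tet i = {i + 2, i + 4, i + 5, i + 6}`
(`exists_cyclicModel`), and rotations `i ↦ i + k` are automorphisms.

Graphs are handled through their even edge sets. A nonempty finite even set has at least as many
edges as vertices, and a minimal nonempty set with that property is connected and 2-regular; so every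
nonempty finite even set contains a cycle (`Graph.EvenSet.exists_cycle`), and the cycles are exactly
the minimal nonempty finite even sets. Hence a matroid whose dependent sets are those containing a
nonempty even set of a graph is graphic, and this form of graphicness passes easily to deletions and
contractions.

* Proper minors are graphic. By rotation it suffices to treat deletion and contraction of the element
  `0`: the deletion is the cycle matroid of a theta graph with three paths of length two, and the
  contraction is that of the complete graph on four vertices.
* The matroid is not graphic (`CyclicModel.not_isGraphic`). There are no loops or parallel edges. A
  vertex star meets every cycle evenly, which forces it to have at least three edges; the degrees sum
  to `14`, so there are at most four vertices, too few for seven distinct edges.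
* The matroid is not bicircular lift (`CyclicModel.not_isBicircularLift`). A set is dependent exactly
  when it contains two cycles. A circuit with one element removed still contains a cycle, by taking
  the symmetric difference of two cycles through that element. Two cycles inside one independent set
  coincide. Applied to four suitable triples this yields a cycle inside `{5, 6}` and a cycle inside
  `{0, 1}`, so the set `{0, 1, 5, 6}` would be dependent, but it is not.
-/

open Set Matroid

universe u

namespace BLFormal

/-! ### Matroid preliminaries -/

/-- A circuit of a matroid: a minimal dependent set. -/
def Circuit {α : Type u} (M : Matroid α) (C : Set α) : Prop := Minimal M.Dep C

/-- Deletion of a set of elements from a matroid. -/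
def del {α : Type u} (M : Matroid α) (D : Set α) : Matroid α := M ↾ (M.E \ D)

/-- Contraction of a set of elements of a matroid, defined by duality. -/
def con {α : Type u} (M : Matroid α) (C : Set α) : Matroid α := (del M✶ C)✶

/-- `N` is a minor of `M` if it is obtained by a contraction followed by a deletion. -/
def IsMinor {α : Type u} (N M : Matroid α) : Prop := ∃ C D : Set α, N = del (con M C) D

/-- `N` is a proper (strict) minor of `M`. -/
def IsStrictMinor {α : Type u} (N M : Matroid α) : Prop := IsMinor N M ∧ N ≠ M

/-- The rank of a set `X` in the matroid `M`, as an extended natural number: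
the supremum of the cardinalities of the independent subsets of `X`. -/
noncomputable def eRk {α : Type u} (M : Matroid α) (X : Set α) : ℕ∞ :=
  ⨆ I : {I : Set α // M.Indep I ∧ I ⊆ X}, (I : Set α).encard

/-- The rank `r(M)` of a matroid, as an extended natural number. -/
noncomputable def eRank {α : Type u} (M : Matroid α) : ℕ∞ := eRk M M.E

/-- A loop of a matroid. -/
def MLoop {α : Type u} (M : Matroid α) (e : α) : Prop := M.Dep {e}

/-- A coloop of a matroid: a loop of the dual. -/
def MColoop {α : Type u} (M : Matroid α) (e : α) : Prop := MLoop M✶ e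

/-- A `k`-separation of a matroid: a partition `(X, Y)` of the ground set with
`|X|, |Y| ≥ k` and `r(X) + r(Y) - r(M) ≤ k - 1`. -/
def IsKSep {α : Type u} (M : Matroid α) (k : ℕ) (X Y : Set α) : Prop :=
  X ∪ Y = M.E ∧ Disjoint X Y ∧ (k : ℕ∞) ≤ X.encard ∧ (k : ℕ∞) ≤ Y.encard ∧
    eRk M X + eRk M Y ≤ eRank M + ((k - 1 : ℕ) : ℕ∞)

/-- A matroid is connected if it has no 1-separation. -/
def MConnected {α : Type u} (M : Matroid α) : Prop := ¬ ∃ X Y, IsKSep M 1 X Y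

/-- A matroid is 3-connected if it is connected and has no 2-separation. -/
def ThreeConnected {α : Type u} (M : Matroid α) : Prop :=
  MConnected M ∧ ¬ ∃ X Y, IsKSep M 2 X Y

/-- Two elements of a matroid form a series pair if no circuit contains exactly one
of them, and some circuit contains both. -/
def SeriesPair {α : Type u} (M : Matroid α) (e f : α) : Prop :=
  (∀ C, Circuit M C → (e ∈ C ↔ f ∈ C)) ∧ ∃ C, Circuit M C ∧ e ∈ C ∧ f ∈ C

/-- A series class: a maximal set in which every two elements form a series pair. -/
def IsSeriesClass {α : Type u} (M : Matroid α) (S : Set α) : Prop :=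
  Maximal (fun T => T.Nonempty ∧ ∀ e ∈ T, ∀ f ∈ T, SeriesPair M e f) S

/-- `N` is a cosimplification `co(M)` of `M`: it is obtained from `M` by contracting
all coloops and, in each series class, all but one element. -/
def IsCosimplification {α : Type u} (M N : Matroid α) : Prop :=
  ∃ D ⊆ M.E, N = con M D ∧ (∀ e, MColoop M e → e ∈ D) ∧
    ∀ S, IsSeriesClass M S → ∃ x ∈ S, S \ D = {x}

/-- `M` is isomorphic to the uniform matroid `U_{k, n}`: the ground set has `n` elements
and the circuits are precisely the `(k+1)`-element subsets of the ground set. -/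
def IsUnif {α : Type u} (k n : ℕ) (M : Matroid α) : Prop :=
  M.E.encard = n ∧ ∀ C, Circuit M C ↔ C ⊆ M.E ∧ C.encard = k + 1

/-- `M` has a `U_{2,4}`-minor. -/
def HasU24Minor {α : Type u} (M : Matroid α) : Prop := ∃ N, IsMinor N M ∧ IsUnif 2 4 N

/-- `M` is isomorphic to the direct sum `U_{2,4} ⊕ U_{0,1}` of `U_{2,4}` and a loop:
its ground set consists of a 4-element set `X` together with one further element `l`,
and its circuits are `{l}` and the 3-element subsets of `X`. -/
def IsU24PlusLoop {α : Type u} (M : Matroid α) : Prop :=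
  ∃ (X : Set α) (l : α), l ∉ X ∧ M.E = insert l X ∧ X.encard = 4 ∧
    ∀ C, Circuit M C ↔ (C = {l} ∨ (C ⊆ X ∧ C.encard = 3))

/-- `M` is isomorphic to the Fano matroid `F₇`: the rank-3 matroid represented over
`GF(2)` by the seven nonzero vectors of `GF(2)³`. -/
def IsFano {α : Type u} (M : Matroid α) : Prop :=
  ∃ v : α → (Fin 3 → ZMod 2),
    Set.BijOn v M.E {w | w ≠ 0} ∧
    ∀ I ⊆ M.E, (M.Indep I ↔ LinearIndependent (ZMod 2) (fun x : I => v x))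

/-! ### Graphs (with loops and parallel edges allowed) -/

/-- A graph on vertex type `V`, with edge set `E` living in the ambient edge type `α`;
each edge is sent to the unordered pair of its end-vertices. -/
structure Graph (V : Type u) (α : Type u) where
  E : Set α
  inc : α → Sym2 V

namespace Graph

variable {V : Type u} {α : Type u}

/-- The vertices incident with an edge set `C`. -/
def vertsOf (G : Graph V α) (C : Set α) : Set V := {v | ∃ e ∈ C, v ∈ G.inc e}

/-- The vertex set of a graph (we consider graphs without isolated vertices). -/
def verts (G : Graph V α) : Set V := G.vertsOf G.E

/-- Deletion of a set of edges from a graph. -/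
def delete (G : Graph V α) (D : Set α) : Graph V α := ⟨G.E \ D, G.inc⟩

/-- The degree of a vertex `v` in the edge set `C`, with loops counting twice. -/
noncomputable def deg (G : Graph V α) (C : Set α) (v : V) : ℕ :=
  {e ∈ C | v ∈ G.inc e}.ncard + {e ∈ C | G.inc e = Sym2.diag v}.ncard

/-- Two vertices are adjacent via an edge of `C`. -/
def AdjOn (G : Graph V α) (C : Set α) (u v : V) : Prop := ∃ e ∈ C, G.inc e = s(u, v)

/-- The subgraph with edge set `C` is connected. -/
def ConnectedOn (G : Graph V α) (C : Set α) : Prop :=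
  ∀ u ∈ G.vertsOf C, ∀ v ∈ G.vertsOf C, Relation.ReflTransGen (G.AdjOn C) u v

/-- `C` is a cycle of `G` : the edge set of a connected 2-regular subgraph. -/
def IsCycle (G : Graph V α) (C : Set α) : Prop :=
  C ⊆ G.E ∧ C.Finite ∧ C.Nonempty ∧ (∀ v ∈ G.vertsOf C, G.deg C v = 2) ∧ G.ConnectedOn C

/-- A graph is 2-edge-connected if each of its edges lies in a cycle. -/
def TwoEdgeConnected (G : Graph V α) : Prop := ∀ e ∈ G.E, ∃ C, G.IsCycle C ∧ e ∈ C

/-- A graph is connected if it has at least one vertex and any two of its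
vertices are joined by a path. -/
def Connected (G : Graph V α) : Prop := G.verts.Nonempty ∧ G.ConnectedOn G.E

/-- Delete a vertex from a graph (removing all edges incident with it). -/
def delVert (G : Graph V α) (v : V) : Graph V α := ⟨{e ∈ G.E | v ∉ G.inc e}, G.inc⟩

/-- A graph is 2-connected if it is connected and stays connected after the
deletion of any vertex. -/
def TwoConnected (G : Graph V α) : Prop :=
  G.Connected ∧ ∀ v ∈ G.verts, (G.delVert v).Connected

/-- `X` contains at least two (distinct) cycles of `G`. -/
def HasTwoCycles (G : Graph V α) (X : Set α) : Prop :=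
  ∃ C₁ C₂, G.IsCycle C₁ ∧ G.IsCycle C₂ ∧ C₁ ≠ C₂ ∧ C₁ ⊆ X ∧ C₂ ⊆ X

/-- The circuits of the bicircular lift matroid of `G`: edge sets containing at
least two cycles and minimal with this property. -/
def LiftCircuit (G : Graph V α) (X : Set α) : Prop :=
  Minimal (fun Y => Y ⊆ G.E ∧ G.HasTwoCycles Y) X

/-- Two edges of a graph form a series pair if no cycle contains exactly one of
them, and some cycle contains both. -/
def SeriesPair (G : Graph V α) (e f : α) : Prop :=
  (∀ C, G.IsCycle C → (e ∈ C ↔ f ∈ C)) ∧ ∃ C, G.IsCycle C ∧ e ∈ C ∧ f ∈ C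

end Graph

/-- `N` is the bicircular lift matroid `L(G)` of `G` : its ground set is `E(G)`
and its circuits are the lift circuits of `G`. -/
def IsLiftRep {V α : Type u} (G : Graph V α) (N : Matroid α) : Prop :=
  N.E = G.E ∧ ∀ C, Circuit N C ↔ G.LiftCircuit C

/-- `N` is the cycle matroid `M(G)` of `G` : its ground set is `E(G)` and its
circuits are the cycles of `G`. -/
def IsGraphicRep {V α : Type u} (G : Graph V α) (N : Matroid α) : Prop :=
  N.E = G.E ∧ ∀ C, Circuit N C ↔ G.IsCycle C

/-- A matroid is bicircular lift if it is (isomorphic to) `L(G)` for some graph `G`. -/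
def IsBicircularLift {α : Type u} (N : Matroid α) : Prop :=
  ∃ (V : Type u) (G : Graph V α), IsLiftRep G N

/-- A matroid is graphic if it is (isomorphic to) the cycle matroid of some graph. -/
def IsGraphic {α : Type u} (N : Matroid α) : Prop :=
  ∃ (V : Type u) (G : Graph V α), IsGraphicRep G N

/-- The class `BL-bar` of matroids that are graphic or bicircular lift. -/
def InBL {α : Type u} (N : Matroid α) : Prop := IsGraphic N ∨ IsBicircularLift N

/-- `M` is an excluded minor for the class `BL-bar`. -/
def ExcludedMinorBL {α : Type u} (M : Matroid α) : Prop :=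
  ¬ InBL M ∧ ∀ N, IsStrictMinor N M → InBL N

/-! ### Special graphs and subdivisions -/

/-- `G` is (a copy of) the complete graph `K₄`. -/
def IsK4 {V α : Type u} (G : Graph V α) : Prop :=
  ∃ v : Fin 4 → V, Function.Injective v ∧
    ∃ ed : {p : Sym2 (Fin 4) // ¬ p.IsDiag} → α, Function.Injective ed ∧
      G.E = Set.range ed ∧ ∀ p, G.inc (ed p) = Sym2.map v p.1

/-- `G` is (a copy of) the complete graph `K₅`. -/
def IsK5 {V α : Type u} (G : Graph V α) : Prop :=
  ∃ v : Fin 5 → V, Function.Injective v ∧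
    ∃ ed : {p : Sym2 (Fin 5) // ¬ p.IsDiag} → α, Function.Injective ed ∧
      G.E = Set.range ed ∧ ∀ p, G.inc (ed p) = Sym2.map v p.1

/-- `G` is (a copy of) the complete bipartite graph `K₃,₃`. -/
def IsK33 {V α : Type u} (G : Graph V α) : Prop :=
  ∃ a b : Fin 3 → V, Function.Injective a ∧ Function.Injective b ∧
    Set.range a ∩ Set.range b = ∅ ∧
    ∃ ed : Fin 3 × Fin 3 → α, Function.Injective ed ∧
      G.E = Set.range ed ∧ ∀ p, G.inc (ed p) = s(a p.1, b p.2)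

/-- `G` is (a copy of) the graph `K₂ⁿ` with two vertices joined by `n` parallel edges. -/
def IsK2n {V α : Type u} (n : ℕ) (G : Graph V α) : Prop :=
  ∃ u v : V, u ≠ v ∧ ∃ ed : Fin n → α, Function.Injective ed ∧
    G.E = Set.range ed ∧ ∀ i, G.inc (ed i) = s(u, v)

/-- `H` is obtained from `G` by subdividing a single edge. -/
def ElemSub {V α : Type u} (G H : Graph V α) : Prop :=
  ∃ e ∈ G.E, ∃ (f g : α) (u v w : V),
    G.inc e = s(u, v) ∧ w ∉ G.verts ∧ f ≠ g ∧
    f ∉ G.E \ {e} ∧ g ∉ G.E \ {e} ∧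
    H.E = (G.E \ {e}) ∪ {f, g} ∧
    H.inc f = s(u, w) ∧ H.inc g = s(w, v) ∧
    ∀ x ∈ G.E \ {e}, H.inc x = G.inc x

/-- `H` is a subdivision of `G` : it is obtained from `G` by repeatedly
subdividing edges. -/
def IsSubdivision {V α : Type u} (G H : Graph V α) : Prop :=
  Relation.ReflTransGen ElemSub G H

/-! ### 2-sums and simplification -/

/-- `N` is the 2-sum `N₁ ⊕₂ᵉ N₂` of `N₁` and `N₂` along `e`. -/
def Is2Sum {α : Type u} (N N₁ N₂ : Matroid α) (e : α) : Prop :=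
  N₁.E ∩ N₂.E = {e} ∧
  ¬ MLoop N₁ e ∧ ¬ MColoop N₁ e ∧ ¬ MLoop N₂ e ∧ ¬ MColoop N₂ e ∧
  N.E = (N₁.E ∪ N₂.E) \ {e} ∧
  ∀ C, Circuit N C ↔
    ((Circuit N₁ C ∧ e ∉ C) ∨ (Circuit N₂ C ∧ e ∉ C) ∨
      ∃ C₁ C₂, Circuit N₁ C₁ ∧ Circuit N₂ C₂ ∧ e ∈ C₁ ∧ e ∈ C₂ ∧
        C = (C₁ \ {e}) ∪ (C₂ \ {e}))

/-- `H` is a simplification `si(G)` of `G` : it is obtained from `G` by deleting all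
loops and all but one edge of each parallel class. -/
def IsSimplification {V α : Type u} (G H : Graph V α) : Prop :=
  H.inc = G.inc ∧ H.E ⊆ G.E ∧ (∀ e ∈ H.E, ¬ (G.inc e).IsDiag) ∧
    ∀ e ∈ G.E, ¬ (G.inc e).IsDiag → ∃! f, f ∈ H.E ∧ G.inc f = G.inc e

/-- `H` is 2-connected, or is obtained from a 2-connected graph and a single edge `K₂`
by identifying one end-vertex of the edge with a vertex of the 2-connected graph. -/
def TwoConnOrPendant {V α : Type u} (H : Graph V α) : Prop :=
  H.TwoConnected ∨
    ∃ (e : α) (u w : V), e ∈ H.E ∧ H.inc e = s(u, w) ∧ u ≠ w ∧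
      (H.delete {e}).TwoConnected ∧ u ∈ (H.delete {e}).verts ∧ w ∉ (H.delete {e}).verts


/-! ### Cycles and even edge sets -/

namespace Graph

variable {V : Type u} {α : Type u}

theorem deg_eq_sum (G : Graph V α) (X : Finset α) (v : V) [DecidableEq V] {a b : α → V}
    (hab : ∀ e, G.inc e = s(a e, b e)) :
    G.deg X v = ∑ e ∈ X, ((if v = a e then 1 else 0) + (if v = b e then 1 else 0)) := by
  classical
  have h1 : {e ∈ (X : Set α) | v ∈ G.inc e} = ((X.filter fun e => v ∈ G.inc e : Finset α) : Set α) := by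
    ext; simp
  have h2 : {e ∈ (X : Set α) | G.inc e = Sym2.diag v} =
      ((X.filter fun e => G.inc e = Sym2.diag v : Finset α) : Set α) := by
    ext; simp
  unfold deg
  rw [h1, h2, Set.ncard_coe_finset, Set.ncard_coe_finset, Finset.card_filter, Finset.card_filter,
    ← Finset.sum_add_distrib]
  refine Finset.sum_congr rfl fun e _ => ?_
  have : Sym2.diag v = s(v, v) := rfl
  rw [hab e, this]
  by_cases h1 : v = a e <;> by_cases h2 : v = b e <;> (simp [h1, h2, eq_comm]; try grind)

theorem finite_vertsOf (G : Graph V α) {X : Set α} (hX : X.Finite) : (G.vertsOf X).Finite := by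
  have : G.vertsOf X = ⋃ e ∈ X, {v | v ∈ G.inc e} := by
    ext; simp [vertsOf]
  rw [this]
  refine hX.biUnion fun e _ => ?_
  induction G.inc e with
  | _ a b =>
    refine (Set.toFinite {a, b}).subset fun v hv => ?_
    simpa using hv

theorem vertsOf_mono (G : Graph V α) {X Y : Set α} (h : X ⊆ Y) : G.vertsOf X ⊆ G.vertsOf Y :=
  fun _ ⟨e, he, hv⟩ => ⟨e, h he, hv⟩

theorem handshake (G : Graph V α) (X : Finset α) (S : Finset V) (hS : G.vertsOf X ⊆ S) :
    ∑ v ∈ S, G.deg X v = 2 * X.card := by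
  classical
  have hex : ∀ e, ∃ p : V × V, G.inc e = s(p.1, p.2) := fun e => by
    induction G.inc e with
    | _ a b => exact ⟨(a, b), rfl⟩
  choose p hp using hex
  simp_rw [G.deg_eq_sum X _ hp]
  rw [Finset.sum_comm]
  have : ∀ e ∈ X, ∑ v ∈ S, ((if v = (p e).1 then 1 else 0) + (if v = (p e).2 then 1 else 0)) = 2 := by
    intro e he
    have h1 : (p e).1 ∈ S := hS ⟨e, he, by rw [hp]; simp⟩
    have h2 : (p e).2 ∈ S := hS ⟨e, he, by rw [hp]; simp⟩
    rw [Finset.sum_add_distrib]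
    simp [h1, h2]
  rw [Finset.sum_congr rfl this]
  simp [mul_comm]

theorem deg_pos (G : Graph V α) {X : Set α} (hX : X.Finite) {v : V} (hv : v ∈ G.vertsOf X) :
    0 < G.deg X v := by
  obtain ⟨e, he, hve⟩ := hv
  have : 0 < {e ∈ X | v ∈ G.inc e}.ncard :=
    (Set.ncard_pos (hX.subset fun _ h => h.1)).2 ⟨e, he, hve⟩
  unfold deg; omega

/-- A vertex of `X` of degree less than two is met by a single edge of `X`, and that edge is not a
loop. -/
theorem exists_pendant (G : Graph V α) {X : Set α} (hX : X.Finite) {v : V}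
    (hv : v ∈ G.vertsOf X) (hd : G.deg X v < 2) :
    ∃ e ∈ X, v ∉ G.vertsOf (X \ {e}) ∧ G.inc e ≠ Sym2.diag v := by
  obtain ⟨e, he, hve⟩ := hv
  have hfin : {e ∈ X | v ∈ G.inc e}.Finite := hX.subset fun _ h => h.1
  have hle : {e ∈ X | v ∈ G.inc e}.ncard ≤ 1 := by unfold deg at hd; omega
  refine ⟨e, he, ?_, ?_⟩
  · rintro ⟨f, ⟨hf, hne⟩, hvf⟩
    exact hne ((Set.ncard_le_one hfin).1 hle f ⟨hf, hvf⟩ e ⟨he, hve⟩)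
  · intro hl
    have h1 : 0 < {e ∈ X | v ∈ G.inc e}.ncard := (Set.ncard_pos hfin).2 ⟨e, he, hve⟩
    have h2 : 0 < {e ∈ X | G.inc e = Sym2.diag v}.ncard :=
      (Set.ncard_pos (hX.subset fun _ h => h.1)).2 ⟨e, he, hl⟩
    unfold deg at hd; omega

/-- A finite nonempty edge set with at least as many edges as vertices contains a cycle:
a minimal such set is connected and 2-regular. -/
theorem exists_cycle_of_card (G : Graph V α) {X : Set α} (hXE : X ⊆ G.E) (hX : X.Finite)
    (hne : X.Nonempty) (hc : (G.vertsOf X).ncard ≤ X.ncard) : ∃ C, C ⊆ X ∧ G.IsCycle C := by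
  have hfam : {Y | Y ⊆ X ∧ Y.Nonempty ∧ (G.vertsOf Y).ncard ≤ Y.ncard}.Finite :=
    hX.finite_subsets.subset fun _ h => h.1
  obtain ⟨C, hCX, hmin⟩ := hfam.exists_le_minimal (a := X) ⟨Subset.rfl, hne, hc⟩
  obtain ⟨⟨-, hCne, hCc⟩, hmin⟩ := hmin
  have hCX : C ⊆ X := hCX
  have hCf : C.Finite := hX.subset hCX
  have hVf := G.finite_vertsOf hCf
  have key : ∀ Y ⊆ C, Y.Nonempty → Y ≠ C → Y.ncard < (G.vertsOf Y).ncard := by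
    intro Y hY hYne hYC
    by_contra hlt
    exact hYC (hY.antisymm (hmin ⟨hY.trans hCX, hYne, not_lt.1 hlt⟩ hY))
  -- removing any edge shows that there are no more edges than vertices
  have hle : C.ncard ≤ (G.vertsOf C).ncard := by
    obtain ⟨e, he⟩ := hCne
    have h3 := Set.ncard_sdiff_singleton_add_one he hCf
    rcases (C \ {e}).eq_empty_or_nonempty with h0 | h0
    · have hV : (G.vertsOf C).Nonempty := by
        have hx : ∃ x, x ∈ G.inc e := by
          induction G.inc e with
          | _ a b => exact ⟨a, by simp⟩
        exact hx.imp fun x hx => ⟨e, he, hx⟩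
      have := (Set.ncard_pos hVf).2 hV
      rw [h0, Set.ncard_empty] at h3
      omega
    · have h1 := key _ sdiff_subset h0 (fun h => by
        have : e ∈ C \ {e} := by rw [h]; exact he
        exact this.2 rfl)
      have h2 := Set.ncard_le_ncard (G.vertsOf_mono (sdiff_subset (s := C) (t := {e}))) hVf
      omega
  refine ⟨C, hCX, hCX.trans hXE, hCf, hCne, ?_, ?_⟩
  -- every vertex has degree at least two
  · have hge : ∀ v ∈ G.vertsOf C, 2 ≤ G.deg C v := by
      intro v hv
      by_contra hlt
      obtain ⟨e, he, hve, hl⟩ := G.exists_pendant hCf hv (by omega)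
      have hsub : G.vertsOf (C \ {e}) ⊆ G.vertsOf C \ {v} := fun w hw =>
        ⟨G.vertsOf_mono sdiff_subset hw, fun h => hve (h ▸ hw)⟩
      have h1 := Set.ncard_le_ncard hsub (hVf.subset sdiff_subset)
      have h2 := Set.ncard_sdiff_singleton_add_one hv hVf
      have h3 := Set.ncard_sdiff_singleton_add_one he hCf
      have hne' : (C \ {e}).Nonempty := by
        rw [Set.nonempty_iff_ne_empty]
        intro h0
        rw [h0] at h3
        simp only [Set.ncard_empty] at h3
        have h4 : (G.vertsOf C).ncard ≤ 1 := by omega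
        apply hl
        have hall : ∀ w, w ∈ G.inc e → w = v := fun w hw =>
          (Set.ncard_le_one hVf).1 h4 w ⟨e, he, hw⟩ v hv
        revert hall
        induction G.inc e with
        | _ a b =>
          intro hall
          rw [hall a (by simp), hall b (by simp)]; rfl
      have := key _ sdiff_subset hne' (fun h => by
        have : e ∈ C \ {e} := by rw [h]; exact he
        exact this.2 rfl)
      omega
    -- hence, by the handshake lemma, exactly two
    have hs := G.handshake hCf.toFinset hVf.toFinset (by simp)
    rw [hCf.coe_toFinset] at hs
    rw [Set.ncard_eq_toFinset_card _ hCf, Set.ncard_eq_toFinset_card _ hVf] at hle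
    intro v hv
    have hsum : ∑ v ∈ hVf.toFinset, G.deg C v ≤ ∑ v ∈ hVf.toFinset, 2 := by
      simp only [Finset.sum_const, smul_eq_mul]; omega
    have hall := (Finset.sum_eq_sum_iff_of_le (s := hVf.toFinset) (f := fun _ => 2)
      (g := fun v => G.deg C v) (fun w hw => hge w (by simpa using hw))).1
      (le_antisymm (Finset.sum_le_sum fun w hw => hge w (by simpa using hw)) hsum)
    exact (hall v (by simpa using hv)).symm
  -- if `C` were disconnected, it would split into two parts on disjoint vertex sets, each with
  -- fewer edges than vertices
  · intro u hu v hv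
    by_contra hnot
    set R : V → Prop := Relation.ReflTransGen (G.AdjOn C) u with hR
    have hadj : ∀ e ∈ C, ∀ w w', w ∈ G.inc e → w' ∈ G.inc e → R w → R w' := by
      intro e he w w' hw hw' hr
      by_cases hww : w = w'
      · exact hww ▸ hr
      · exact hr.tail ⟨e, he, ((Sym2.mem_and_mem_iff hww).1 ⟨hw, hw'⟩)⟩
    set X₁ : Set α := {e ∈ C | ∃ w ∈ G.inc e, R w} with hX₁
    have hsub : X₁ ⊆ C := fun _ h => h.1
    obtain ⟨e, he, hue⟩ := hu
    obtain ⟨f, hf, hvf⟩ := hv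
    have he₁ : e ∈ X₁ := ⟨he, u, hue, Relation.ReflTransGen.refl⟩
    have hf₁ : f ∉ X₁ := fun ⟨_, w, hw, hr⟩ => hnot (hadj f hf w v hw hvf hr)
    have k1 := key X₁ hsub ⟨e, he₁⟩ (fun h => hf₁ (h ▸ hf))
    have k2 := key (C \ X₁) sdiff_subset ⟨f, hf, hf₁⟩ (fun h => by
      have : e ∈ C \ X₁ := by rw [h]; exact he
      exact this.2 he₁)
    have hdisj : Disjoint (G.vertsOf X₁) (G.vertsOf (C \ X₁)) := by
      rw [Set.disjoint_left]
      rintro w ⟨a, ⟨haC, x, hx, hrx⟩, hwa⟩ ⟨b, ⟨hbC, hb⟩, hwb⟩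
      exact hb ⟨hbC, w, hwb, hadj a haC x w hx hwa hrx⟩
    have hu1 := Set.ncard_union_eq hdisj (hVf.subset (G.vertsOf_mono hsub))
      (hVf.subset (G.vertsOf_mono sdiff_subset))
    have hu2 := Set.ncard_le_ncard (Set.union_subset (G.vertsOf_mono hsub)
      (G.vertsOf_mono (sdiff_subset (t := X₁)))) hVf
    have hu3 := Set.ncard_sdiff_add_ncard_of_subset hsub hCf
    omega

/-- An edge set all of whose degrees are even: a member of the binary cycle space of `G`. -/
def EvenSet (G : Graph V α) (Y : Set α) : Prop := ∀ v, Even (G.deg Y v)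

theorem IsCycle.evenSet {G : Graph V α} {C : Set α} (hC : G.IsCycle C) : G.EvenSet C := by
  intro v
  by_cases hv : v ∈ G.vertsOf C
  · rw [hC.2.2.2.1 v hv]; exact even_two
  · have h1 : {e ∈ C | v ∈ G.inc e} = ∅ := by
      ext e; simp only [Set.mem_ofPred_eq, Set.mem_empty_iff_false, iff_false]
      exact fun h => hv ⟨e, h⟩
    have h2 : {e ∈ C | G.inc e = Sym2.diag v} = ∅ := by
      ext e; simp only [Set.mem_ofPred_eq, Set.mem_empty_iff_false, iff_false]
      exact fun h => hv ⟨e, h.1, by rw [h.2]; simp [Sym2.diag]⟩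
    simp [deg, h1, h2]

/-- Every vertex met by an even set has degree at least two, so the handshake lemma gives at least as
many edges as vertices. -/
theorem EvenSet.exists_cycle {G : Graph V α} {Y : Set α} (hY : G.EvenSet Y) (hYE : Y ⊆ G.E)
    (hf : Y.Finite) (hne : Y.Nonempty) : ∃ C, C ⊆ Y ∧ G.IsCycle C := by
  refine G.exists_cycle_of_card hYE hf hne ?_
  have hVf := G.finite_vertsOf hf
  have hs := G.handshake hf.toFinset hVf.toFinset (by simp)
  rw [hf.coe_toFinset] at hs
  rw [Set.ncard_eq_toFinset_card _ hf, Set.ncard_eq_toFinset_card _ hVf]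
  have : ∑ v ∈ hVf.toFinset, 2 ≤ ∑ v ∈ hVf.toFinset, G.deg Y v := by
    refine Finset.sum_le_sum fun v hv => ?_
    have h1 := G.deg_pos hf (v := v) (by simpa using hv)
    obtain ⟨k, hk⟩ := hY v
    omega
  simp only [Finset.sum_const, smul_eq_mul] at this
  omega

/-- A cycle is a minimal nonempty even set: a nonempty even subset uses up the degree of each of
its vertices, and the cycle is connected. -/
theorem IsCycle.eq_of_evenSet_subset {G : Graph V α} {C Y : Set α} (hC : G.IsCycle C)
    (hY : G.EvenSet Y) (hYC : Y ⊆ C) (hne : Y.Nonempty) : Y = C := by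
  obtain ⟨-, hCf, -, hdeg, hconn⟩ := hC
  have hYf := hCf.subset hYC
  have hstar : ∀ v ∈ G.vertsOf Y, ∀ e ∈ C, v ∈ G.inc e → e ∈ Y := by
    intro v hv e he hve
    have h1 := G.deg_pos hYf hv
    have h2 := hdeg v (G.vertsOf_mono hYC hv)
    obtain ⟨k, hk⟩ := hY v
    have a1 : {e ∈ Y | v ∈ G.inc e} ⊆ {e ∈ C | v ∈ G.inc e} := fun x hx => ⟨hYC hx.1, hx.2⟩
    have a2 : {e ∈ Y | G.inc e = Sym2.diag v} ⊆ {e ∈ C | G.inc e = Sym2.diag v} :=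
      fun x hx => ⟨hYC hx.1, hx.2⟩
    have f1 : {e ∈ C | v ∈ G.inc e}.Finite := hCf.subset fun _ h => h.1
    have b1 := Set.ncard_le_ncard a1 f1
    have b2 := Set.ncard_le_ncard a2 (hCf.subset fun _ h => h.1)
    unfold deg at h1 h2 hk
    have := Set.eq_of_subset_of_ncard_le a1 (by omega) f1
    have he' : e ∈ {e ∈ C | v ∈ G.inc e} := ⟨he, hve⟩
    rw [← this] at he'
    exact he'.1
  refine hYC.antisymm fun e he => ?_
  obtain ⟨f, hf⟩ := hne
  have hreach : ∀ u ∈ G.vertsOf Y, ∀ w, Relation.ReflTransGen (G.AdjOn C) u w →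
      w ∈ G.vertsOf Y := by
    intro u hu w h
    induction h with
    | refl => exact hu
    | tail _ hadj ih =>
      obtain ⟨g, hg, hgi⟩ := hadj
      exact ⟨g, hstar _ ih g hg (by rw [hgi]; simp), by rw [hgi]; simp⟩
  have hx : ∀ e : α, ∃ x, x ∈ G.inc e := fun e => by
    induction G.inc e with
    | _ a b => exact ⟨a, by simp⟩
  obtain ⟨x, hxe⟩ := hx e
  obtain ⟨y, hyf⟩ := hx f
  exact hstar x (hreach y ⟨f, hf, hyf⟩ x (hconn y ⟨f, hYC hf, hyf⟩ x ⟨e, he, hxe⟩)) e he hxe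

/-- The non-loop edges of `Y` at `v`. Loops count twice in the degree, so the size of the star has the
same parity as the degree. -/
def star (G : Graph V α) (Y : Set α) (v : V) : Set α :=
  {e ∈ Y | v ∈ G.inc e ∧ G.inc e ≠ Sym2.diag v}

theorem even_deg_iff (G : Graph V α) {Y : Set α} (hY : Y.Finite) (v : V) :
    Even (G.deg Y v) ↔ Even (G.star Y v).ncard := by
  have hl : {e ∈ Y | G.inc e = Sym2.diag v} ⊆ {e ∈ Y | v ∈ G.inc e} := fun e he =>
    ⟨he.1, by rw [he.2]; simp [Sym2.diag]⟩
  have hs : G.star Y v = {e ∈ Y | v ∈ G.inc e} \ {e ∈ Y | G.inc e = Sym2.diag v} := by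
    ext e; simp only [star, Set.mem_ofPred_eq, Set.mem_sdiff]; tauto
  have := Set.ncard_sdiff_add_ncard_of_subset hl (hY.subset fun _ h => h.1)
  rw [hs, deg, ← this, add_assoc, Nat.even_add]
  simp

theorem even_ncard_symmDiff {A B : Set α} (hA : A.Finite) (hB : B.Finite) :
    Even (symmDiff A B).ncard ↔ (Even A.ncard ↔ Even B.ncard) := by
  have h1 := Set.ncard_inter_add_ncard_sdiff_eq_ncard A B hA
  have h2 := Set.ncard_inter_add_ncard_sdiff_eq_ncard B A hB
  have h3 : (symmDiff A B).ncard = (A \ B).ncard + (B \ A).ncard := by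
    rw [Set.symmDiff_def, Set.ncard_union_eq disjoint_sdiff_sdiff (hA.subset sdiff_subset)
      (hB.subset sdiff_subset)]
  rw [Set.inter_comm] at h2
  rw [h3, ← h1, ← h2]
  simp only [Nat.even_add]; tauto

theorem EvenSet.symmDiff {G : Graph V α} {Y Z : Set α} (hY : G.EvenSet Y) (hZ : G.EvenSet Z)
    (hYf : Y.Finite) (hZf : Z.Finite) : G.EvenSet (symmDiff Y Z) := by
  intro v
  have hf : (_root_.symmDiff Y Z).Finite := hYf.symmDiff hZf
  have hs : G.star (_root_.symmDiff Y Z) v = _root_.symmDiff (G.star Y v) (G.star Z v) := by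
    ext e; simp only [star, Set.mem_ofPred_eq, Set.mem_symmDiff]; tauto
  rw [G.even_deg_iff hf, hs, even_ncard_symmDiff (hYf.subset fun _ h => h.1)
    (hZf.subset fun _ h => h.1)]
  have h1 := (G.even_deg_iff hYf v).1 (hY v)
  have h2 := (G.even_deg_iff hZf v).1 (hZ v)
  tauto

end Graph

/-! ### Graphic representations through even sets -/

/-- `G` represents the finite matroid `M` through its cycle space: a set is dependent in `M`
exactly when it contains a nonempty even set of `G`. -/
def EvenRep {V α : Type u} (M : Matroid α) (G : Graph V α) : Prop :=
  M.E = G.E ∧ M.E.Finite ∧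
    ∀ X, M.Dep X ↔ X ⊆ M.E ∧ ∃ Y, Y ⊆ X ∧ Y.Nonempty ∧ G.EvenSet Y

/-- `M` has some representation by the even sets of a graph. -/
def HasEvenRep {α : Type u} (M : Matroid α) : Prop :=
  ∃ (V : Type u) (G : Graph V α), EvenRep M G

theorem HasEvenRep.isGraphic {α : Type u} {M : Matroid α} (h : HasEvenRep M) : IsGraphic M := by
  obtain ⟨V, G, hE, hfin, hdep⟩ := h
  refine ⟨V, G, hE, fun C => ⟨fun hC => ?_, fun hC => ⟨?_, fun X hX hXC => ?_⟩⟩⟩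
  · obtain ⟨hCE, Y, hYC, hne, hY⟩ := (hdep C).1 hC.prop
    obtain ⟨K, hKY, hK⟩ := hY.exists_cycle (hE ▸ hYC.trans hCE) (hfin.subset (hYC.trans hCE)) hne
    have hKd : M.Dep K :=
      (hdep K).2 ⟨(hKY.trans hYC).trans hCE, K, Subset.rfl, hK.2.2.1, hK.evenSet⟩
    have : K = C := (hKY.trans hYC).antisymm (hC.2 hKd (hKY.trans hYC))
    exact this ▸ hK
  · exact (hdep C).2 ⟨hE ▸ hC.1, C, Subset.rfl, hC.2.2.1, hC.evenSet⟩
  · obtain ⟨-, Y, hYX, hne, hY⟩ := (hdep X).1 hX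
    exact (hC.eq_of_evenSet_subset hY (hYX.trans hXC) hne).symm.subset.trans hYX

theorem HasEvenRep.delete {α : Type u} {M : Matroid α} (h : HasEvenRep M) (D : Set α) :
    HasEvenRep (M ＼ D) := by
  obtain ⟨V, G, hE, hfin, hdep⟩ := h
  refine ⟨V, G.delete D, by simp [Graph.delete, hE], hfin.subset sdiff_subset, fun X => ?_⟩
  rw [Matroid.delete_dep_iff, hdep, Matroid.delete_ground, subset_sdiff]
  have : ∀ Y, (G.delete D).EvenSet Y ↔ G.EvenSet Y := fun Y => Iff.rfl
  simp only [this]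
  tauto

namespace Graph

variable {V : Type u} {α : Type u}

/-- Contraction of a non-loop edge `e` with ends `u` and `v`: the vertex `v` is merged into `u`. -/
noncomputable def contractEdge (G : Graph V α) (e : α) (u v : V) : Graph V α :=
  open Classical in ⟨G.E \ {e}, fun x => (G.inc x).map fun y => if y = v then u else y⟩

theorem star_contractEdge (G : Graph V α) (e : α) {u v : V} (huv : u ≠ v) (Y : Set α) (w : V) :
    (G.contractEdge e u v).star Y w = open Classical in
      if w = v then ∅ else if w = u then symmDiff (G.star Y u) (G.star Y v) else G.star Y w := by
  classical
  have hd : ∀ x : V, Sym2.diag x = s(x, x) := fun _ => rfl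
  split_ifs with h1 h2 <;> ext x <;>
    simp only [star, contractEdge, Set.mem_ofPred_eq, Set.mem_symmDiff, Set.mem_empty_iff_false,
      iff_false, hd] <;>
    induction G.inc x with
    | _ a b =>
      simp only [Sym2.map_mk, Sym2.mem_iff, ne_eq, Sym2.eq_iff]
      grind

/-- Merging `v` into `u` replaces the two parity conditions at `u` and `v` by their sum. -/
theorem evenSet_contractEdge_iff (G : Graph V α) (e : α) {u v : V} (huv : u ≠ v) {Y : Set α}
    (hY : Y.Finite) : (G.contractEdge e u v).EvenSet Y ↔
      (∀ w, w ≠ u → w ≠ v → Even (G.star Y w).ncard) ∧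
        (Even (G.star Y u).ncard ↔ Even (G.star Y v).ncard) := by
  have hf : ∀ w, (G.star Y w).Finite := fun w => hY.subset fun _ h => h.1
  constructor
  · intro h
    have h' := fun w => ((G.contractEdge e u v).even_deg_iff hY w).1 (h w)
    refine ⟨fun w hu hv => ?_, ?_⟩
    · have := h' w
      rwa [G.star_contractEdge e huv, if_neg hv, if_neg hu] at this
    · have := h' u
      rwa [G.star_contractEdge e huv, if_neg huv, if_pos rfl,
        even_ncard_symmDiff (hf u) (hf v)] at this
  · rintro ⟨h1, h2⟩ w
    rw [even_deg_iff _ hY, G.star_contractEdge e huv]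
    split_ifs with hv hu
    · simp
    · rwa [even_ncard_symmDiff (hf u) (hf v)]
    · exact h1 w hu hv

theorem evenSet_iff_star (G : Graph V α) {Y : Set α} (hY : Y.Finite) :
    G.EvenSet Y ↔ ∀ w, Even (G.star Y w).ncard :=
  forall_congr' fun w => G.even_deg_iff hY w

theorem star_singleton (G : Graph V α) {e : α} {u v : V} (he : G.inc e = s(u, v)) (huv : u ≠ v)
    (w : V) : G.star {e} w = open Classical in if w = u ∨ w = v then {e} else ∅ := by
  have hd : ∀ x : V, Sym2.diag x = s(x, x) := fun _ => rfl
  ext x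
  split_ifs with h <;> simp only [star, Set.mem_ofPred_eq, Set.mem_singleton_iff, hd,
    Set.mem_empty_iff_false]
  · constructor
    · exact fun h => h.1
    · rintro rfl
      refine ⟨rfl, ?_⟩
      rw [he]; simp only [Sym2.mem_iff, ne_eq, Sym2.eq_iff]; grind
  · rw [iff_false]
    rintro ⟨rfl, h1, -⟩
    rw [he] at h1
    exact h (by simpa using h1)

theorem evenSet_singleton_of_isDiag (G : Graph V α) {e : α} (he : (G.inc e).IsDiag) :
    G.EvenSet {e} := by
  rw [G.evenSet_iff_star (Set.finite_singleton e)]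
  intro w
  have : G.star {e} w = ∅ := by
    ext x
    simp only [star, Set.mem_ofPred_eq, Set.mem_singleton_iff, Set.mem_empty_iff_false, iff_false]
    rintro ⟨rfl, h1, h2⟩
    revert he h1 h2
    induction G.inc x with
    | _ a b =>
      have hd : ∀ x : V, Sym2.diag x = s(x, x) := fun _ => rfl
      simp only [Sym2.mk_isDiag_iff, Sym2.mem_iff, ne_eq, hd, Sym2.eq_iff]
      grind
  simp [this]

theorem evenSet_pair_of_parallel (G : Graph V α) {e f : α} (hne : e ≠ f)
    (h : G.inc e = G.inc f) : G.EvenSet {e, f} := by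
  have hfin : ({e, f} : Set α).Finite := Set.toFinite _
  rw [G.evenSet_iff_star hfin]
  intro w
  by_cases hw : w ∈ G.inc e ∧ G.inc e ≠ Sym2.diag w
  · have : G.star {e, f} w = {e, f} := by
      ext x
      simp only [star, Set.mem_ofPred_eq, Set.mem_insert_iff, Set.mem_singleton_iff]
      constructor
      · exact fun h => h.1
      · rintro (rfl | rfl)
        · exact ⟨Or.inl rfl, hw⟩
        · exact ⟨Or.inr rfl, h ▸ hw⟩
    rw [this, Set.ncard_pair hne]; exact even_two
  · have : G.star {e, f} w = ∅ := by
      ext x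
      simp only [star, Set.mem_ofPred_eq, Set.mem_insert_iff, Set.mem_singleton_iff,
        Set.mem_empty_iff_false, iff_false]
      rintro ⟨rfl | rfl, hx⟩
      · exact hw hx
      · exact hw (h ▸ hx)
    simp [this]

end Graph

/-- An even set of the contracted graph becomes even in `G`, possibly after adding `e`, according to
the common parity of the degrees at the two ends of `e`. -/
theorem HasEvenRep.contractElem {α : Type u} {M : Matroid α} (h : HasEvenRep M) (e : α) :
    HasEvenRep (M ／ {e}) := by
  by_cases heE : e ∈ M.E
  swap
  · rwa [Matroid.contractElem_eq_self heE]
  by_cases hl : M.IsLoop e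
  · rw [Matroid.contract_eq_delete_of_subset_loops (Set.singleton_subset_iff.2 hl)]
    exact h.delete _
  have hnl : M.IsNonloop e := (Matroid.not_isLoop_iff heE).1 hl
  obtain ⟨V, G, hE, hfin, hdep⟩ := h
  have hnot : ¬ G.EvenSet {e} := fun hev =>
    ((hdep {e}).2 ⟨by simpa using heE, {e}, Subset.rfl, by simp, hev⟩).not_indep hnl.indep
  obtain ⟨u, v, huv, he⟩ : ∃ u v : V, u ≠ v ∧ G.inc e = s(u, v) := by
    have hd : ¬ (G.inc e).IsDiag := fun hd => hnot (G.evenSet_singleton_of_isDiag hd)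
    revert hd
    induction G.inc e with
    | _ a b => exact fun hd => ⟨a, b, by simpa using hd, rfl⟩
  refine ⟨V, G.contractEdge e u v, by simp [Graph.contractEdge, hE], hfin.subset sdiff_subset,
    fun X => ?_⟩
  rw [hnl.indep.contract_dep_iff, hdep, Matroid.contract_ground, subset_sdiff]
  constructor
  · rintro ⟨hXe, hXE, Y, hYX, hne, hY⟩
    have hYf : Y.Finite := hfin.subset (hYX.trans hXE)
    refine ⟨⟨subset_union_left.trans hXE, hXe⟩, Y \ {e}, ?_, ?_, ?_⟩
    · rintro x ⟨hx, hxe⟩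
      exact (hYX hx).resolve_right hxe
    · rw [Set.nonempty_iff_ne_empty]
      intro h0
      have : Y = {e} := (Set.Nonempty.subset_singleton_iff hne).1 (sdiff_eq_empty.1 h0)
      exact hnot (this ▸ hY)
    -- `e` is a loop of the contracted graph, hence lies in no star
    · have hst : ∀ w, (G.contractEdge e u v).star (Y \ {e}) w = (G.contractEdge e u v).star Y w := by
        intro w
        ext x
        simp only [Graph.star, Set.mem_ofPred_eq, Set.mem_sdiff, Set.mem_singleton_iff]
        refine ⟨fun h => ⟨h.1.1, h.2⟩, fun h => ⟨⟨h.1, ?_⟩, h.2⟩⟩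
        rintro rfl
        have h1 := h.2.1
        have h2 := h.2.2
        have hd : Sym2.diag w = s(w, w) := rfl
        simp only [Graph.contractEdge, he, Sym2.map_mk, Sym2.mem_iff, ne_eq, hd, Sym2.eq_iff]
          at h1 h2
        grind
      rw [Graph.evenSet_iff_star _ (hYf.subset sdiff_subset)]
      simp only [hst]
      rw [← Graph.evenSet_iff_star _ hYf, G.evenSet_contractEdge_iff e huv hYf]
      rw [G.evenSet_iff_star hYf] at hY
      exact ⟨fun w _ _ => hY w, iff_of_true (hY u) (hY v)⟩
  · rintro ⟨⟨hXE, hXe⟩, Y, hYX, hne, hY⟩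
    have hYf : Y.Finite := hfin.subset (hYX.trans hXE)
    have heY : e ∉ Y := fun h => Set.disjoint_singleton_right.1 hXe (hYX h)
    refine ⟨hXe, union_subset hXE (by simpa using heE), ?_⟩
    rw [G.evenSet_contractEdge_iff e huv hYf] at hY
    by_cases hu : Even (G.star Y u).ncard
    · refine ⟨Y, hYX.trans subset_union_left, hne, ?_⟩
      rw [G.evenSet_iff_star hYf]
      intro w
      by_cases h1 : w = u
      · rwa [h1]
      by_cases h2 : w = v
      · rw [h2]; exact hY.2.1 hu
      exact hY.1 w h1 h2
    · refine ⟨symmDiff Y {e}, ?_, ?_, ?_⟩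
      · intro x hx
        rcases hx with hx | hx
        · exact Or.inl (hYX hx.1)
        · exact Or.inr hx.1
      · exact ⟨e, Or.inr ⟨rfl, heY⟩⟩
      · have hef : ({e} : Set α).Finite := Set.finite_singleton e
        rw [G.evenSet_iff_star (hYf.symmDiff hef)]
        intro w
        have hs : G.star (symmDiff Y {e}) w = symmDiff (G.star Y w) (G.star {e} w) := by
          ext x; simp only [Graph.star, Set.mem_ofPred_eq, Set.mem_symmDiff]; tauto
        rw [hs, Graph.even_ncard_symmDiff (hYf.subset fun _ h => h.1) (hef.subset fun _ h => h.1),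
          G.star_singleton he huv]
        have hv : ¬ Even (G.star Y v).ncard := fun h => hu (hY.2.2 h)
        split_ifs with hw
        · rcases hw with rfl | rfl <;> simp [hu, hv]
        · rw [not_or] at hw
          simp [hY.1 w hw.1 hw.2]

theorem HasEvenRep.contract {α : Type u} {M : Matroid α} (h : HasEvenRep M) (C : Set α) :
    HasEvenRep (M ／ C) := by
  have hfin : (C ∩ M.E).Finite := h.choose_spec.choose_spec.2.1.subset inter_subset_right
  rw [← Matroid.contract_inter_ground_eq]
  generalize C ∩ M.E = K at hfin
  induction K, hfin using Set.Finite.induction_on with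
  | empty => simpa using h
  | insert _ _ ih =>
    rw [← Set.union_singleton, ← Matroid.contract_contract]
    exact ih.contractElem _

/-! ### The cyclic model of the dual Fano matroid -/

/-- The complement of the line `{i, i + 1, i + 3}` in the cyclic model of the Fano plane. -/
def tet (i : Fin 7) : Finset (Fin 7) := {i + 2, i + 4, i + 5, i + 6}

/-- `f` identifies `N` with the dual of the cyclic model of the Fano plane on `Fin 7`: the circuits
of `N` are the images of the seven line complements. -/
def CyclicModel {α : Type u} (N : Matroid α) (f : Fin 7 → α) : Prop :=
  f.Injective ∧ Set.range f = N.E ∧ ∀ S : Finset (Fin 7), N.Dep (f '' S) ↔ ∃ i, tet i ⊆ S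

/-- The powers of a root of `x³ + x + 1` in the field with eight elements. The vectors indexed by
`i`, `i + 1`, `i + 3` sum to zero. -/
def fanoVec : Fin 7 → Fin 3 → ZMod 2 :=
  ![![1, 0, 0], ![0, 1, 0], ![0, 0, 1], ![1, 1, 0], ![0, 1, 1], ![1, 1, 1], ![1, 0, 1]]

theorem fanoVec_injective : Function.Injective fanoVec := by decide

theorem fanoVec_ne_zero : ∀ i, fanoVec i ≠ 0 := by decide

theorem exists_fanoVec : ∀ w : Fin 3 → ZMod 2, w ≠ 0 → ∃ i, fanoVec i = w := by decide

theorem fanoVec_triple (a b c : Fin 7) (hab : a ≠ b) (hac : a ≠ c) (hbc : b ≠ c) :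
    LinearIndependent (ZMod 2) ![fanoVec a, fanoVec b, fanoVec c] ↔
      fanoVec a + fanoVec b + fanoVec c ≠ 0 := by
  rw [Fintype.linearIndependent_iff]
  simp only [Fin.sum_univ_three, Matrix.cons_val_zero, Matrix.cons_val_one, Matrix.cons_val]
  constructor
  · intro h h0
    exact one_ne_zero (h (fun _ => 1) (by simpa using h0) 0)
  · intro h g hg
    have key : ∀ a b c : Fin 7, a ≠ b → a ≠ c → b ≠ c → fanoVec a + fanoVec b + fanoVec c ≠ 0 →
        ∀ x y z : ZMod 2, x • fanoVec a + y • fanoVec b + z • fanoVec c = 0 →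
          x = 0 ∧ y = 0 ∧ z = 0 := by decide
    obtain ⟨h0, h1, h2⟩ := key a b c hab hac hbc h _ _ _ hg
    intro i
    fin_cases i
    exacts [h0, h1, h2]

/-- The complement of `S` contains no basis of the Fano plane exactly when it is contained in a
line. -/
theorem exists_tet_iff : ∀ S : Finset (Fin 7),
    (∀ a b c : Fin 7, a ≠ b → a ≠ c → b ≠ c → a ∉ S → b ∉ S → c ∉ S →
      fanoVec a + fanoVec b + fanoVec c = 0) ↔ ∃ i, tet i ⊆ S := by
  decide +kernel

/-- A set is dependent in `N` when it meets every basis of the Fano matroid `N✶`, that is, when its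
complement contains no independent triple. -/
theorem exists_cyclicModel {α : Type u} {N : Matroid α} (h : IsFano N✶) :
    ∃ f, CyclicModel N f := by
  obtain ⟨v, hbij, hind⟩ := h
  have hex : ∀ i, ∃ x ∈ N✶.E, v x = fanoVec i := fun i => hbij.surjOn (fanoVec_ne_zero i)
  choose f hfE hfv using hex
  have hinj : f.Injective := fun i j hij => fanoVec_injective (by rw [← hfv, ← hfv, hij])
  have hrange : Set.range f = N✶.E := by
    refine Set.Subset.antisymm (Set.range_subset_iff.2 hfE) fun x hx => ?_
    obtain ⟨i, hi⟩ := exists_fanoVec (v x) (hbij.mapsTo hx)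
    exact ⟨i, hbij.injOn (hfE i) hx (by rw [hfv, hi])⟩
  have hvf : ∀ i, v (f i) = fanoVec i := hfv
  have htriple : ∀ a b c : Fin 7, a ≠ b → a ≠ c → b ≠ c →
      (N✶.Indep {f a, f b, f c} ↔ fanoVec a + fanoVec b + fanoVec c ≠ 0) := by
    intro a b c hab hac hbc
    rw [← fanoVec_triple a b c hab hac hbc, hind _ (by
      rintro x (rfl | rfl | rfl) <;> exact hfE _)]
    have hg : Function.Injective ![f a, f b, f c] := by
      intro i j
      have h1 := hinj.ne hab
      have h2 := hinj.ne hac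
      have h3 := hinj.ne hbc
      fin_cases i <;> fin_cases j <;> simp [h1, h2, h3, h1.symm, h2.symm, h3.symm]
    have hr : ({f a, f b, f c} : Set α) = Set.range ![f a, f b, f c] := by
      simp only [Matrix.range_cons, Matrix.range_empty, Set.union_empty, Set.singleton_union]
    have hcomp : v ∘ ![f a, f b, f c] = ![fanoVec a, fanoVec b, fanoVec c] := by
      funext i
      fin_cases i <;> simp [hvf]
    rw [hr, ← hcomp]
    exact linearIndepOn_range_iff hg v
  -- every independent set has at most three elements, so the bases are the independent triples
  have hle : ∀ I, N✶.Indep I → I.encard ≤ 3 := by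
    intro I hI
    have hli := (hind I hI.subset_ground).1 hI
    have hIf : I.Finite := by
      refine Set.Finite.subset ?_ hI.subset_ground
      rw [← hrange]; exact Set.finite_range f
    have := hIf.fintype
    have hcard := hli.fintype_card_le_finrank
    rw [Module.finrank_fintype_fun_eq_card, Fintype.card_fin] at hcard
    rw [Set.encard_eq_coe_toFinset_card, Set.toFinset_card]
    exact_mod_cast hcard
  have htri : ∀ a b c : Fin 7, a ≠ b → a ≠ c → b ≠ c → ({f a, f b, f c} : Set α).encard = 3 := by
    intro a b c hab hac hbc
    exact Set.encard_eq_three.2 ⟨_, _, _, hinj.ne hab, hinj.ne hac, hinj.ne hbc, rfl⟩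
  have hbase : ∀ a b c : Fin 7, a ≠ b → a ≠ c → b ≠ c → fanoVec a + fanoVec b + fanoVec c ≠ 0 →
      N✶.IsBase {f a, f b, f c} := by
    intro a b c hab hac hbc h
    have hI := (htriple a b c hab hac hbc).2 h
    obtain ⟨B, hB, hIB⟩ := hI.exists_isBase_superset
    have hfin : ({f a, f b, f c} : Set α).Finite := Set.toFinite _
    have : ({f a, f b, f c} : Set α) = B :=
      hfin.eq_of_subset_of_encard_le hIB
        (by rw [htri a b c hab hac hbc]; exact hle B hB.indep)
    rwa [this]
  have hB0 := hbase 0 1 2 (by decide) (by decide) (by decide) (by decide)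
  refine ⟨f, hinj, hrange, fun S => ?_⟩
  have hSE : f '' S ⊆ N✶.E := by rw [← hrange]; exact Set.image_subset_range _ _
  rw [← exists_tet_iff]
  have hdd : N.Dep (f '' S) ↔ (∀ B, N✶.IsBase B → (f '' S ∩ B).Nonempty) := by
    rw [← and_iff_left (a := ∀ B, _) hSE, ← Matroid.dual_dep_iff_forall, Matroid.dual_dual]
  have hmem : ∀ a, f a ∈ f '' (S : Set (Fin 7)) ↔ a ∈ S := fun a => by
    rw [hinj.mem_set_image]; rfl
  rw [hdd]
  constructor
  · intro hB a b c hab hac hbc ha hb hc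
    by_contra hne
    obtain ⟨x, hxS, hx⟩ := hB _ (hbase a b c hab hac hbc hne)
    rcases hx with rfl | rfl | rfl
    · exact ha ((hmem a).1 hxS)
    · exact hb ((hmem b).1 hxS)
    · exact hc ((hmem c).1 hxS)
  · intro hS B hB
    by_contra hne
    have hcard : B.encard = 3 := by
      rw [hB.encard_eq_encard_of_isBase hB0]; exact htri 0 1 2 (by decide) (by decide) (by decide)
    obtain ⟨x, y, z, hxy, hxz, hyz, rfl⟩ := Set.encard_eq_three.1 hcard
    have hBE := hB.subset_ground
    rw [← hrange] at hBE
    obtain ⟨a, rfl⟩ := hBE (show x ∈ _ by simp)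
    obtain ⟨b, rfl⟩ := hBE (show y ∈ _ by simp)
    obtain ⟨c, rfl⟩ := hBE (show z ∈ _ by simp)
    have hout : ∀ d, f d ∈ ({f a, f b, f c} : Set α) → d ∉ S := fun d hd hdS =>
      hne ⟨f d, (hmem d).2 hdS, hd⟩
    have hab := ne_of_apply_ne f hxy
    have hac := ne_of_apply_ne f hxz
    have hbc := ne_of_apply_ne f hyz
    exact (htriple a b c hab hac hbc).1 hB.indep (hS a b c hab hac hbc (hout a (by simp))
      (hout b (by simp)) (hout c (by simp)))

namespace CyclicModel

variable {α : Type u} {N : Matroid α} {f : Fin 7 → α}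

/-- The rotation `i ↦ i + k` is an automorphism of the model. -/
theorem rotate (h : CyclicModel N f) (k : Fin 7) : CyclicModel N fun i => f (i + k) := by
  obtain ⟨hinj, hrange, hdep⟩ := h
  refine ⟨fun i j hij => add_right_cancel (hinj hij), ?_, fun S => ?_⟩
  · rw [← hrange]
    exact (Equiv.addRight k).surjective.range_comp f
  · have hS : (fun i => f (i + k)) '' (S : Set (Fin 7)) =
        f '' ((S.image (· + k) : Finset (Fin 7)) : Set (Fin 7)) := by
      rw [Finset.coe_image, Set.image_image]
    have key : ∀ k i : Fin 7, tet (i + k) = (tet i).image (· + k) := by decide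
    rw [hS, hdep]
    constructor
    · rintro ⟨i, hi⟩
      refine ⟨i - k, ?_⟩
      rw [← sub_add_cancel i k, key] at hi
      exact (Finset.image_subset_image_iff (add_left_injective k)).1 hi
    · rintro ⟨i, hi⟩
      exact ⟨i + k, by rw [key]; exact Finset.image_subset_image hi⟩

theorem exists_label_zero (h : CyclicModel N f) {e : α} (he : e ∈ N.E) :
    ∃ g, CyclicModel N g ∧ g 0 = e := by
  rw [← h.2.1] at he
  obtain ⟨k, rfl⟩ := he
  exact ⟨_, h.rotate k, by simp⟩

theorem exists_eq_image (h : CyclicModel N f) {X : Set α} (hX : X ⊆ N.E) :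
    ∃ S : Finset (Fin 7), X = f '' S := by
  classical
  refine ⟨Finset.univ.filter fun i => f i ∈ X, ?_⟩
  ext x
  constructor
  · intro hx
    obtain ⟨i, rfl⟩ := h.2.1 ▸ hX hx
    exact ⟨i, by simpa using hx, rfl⟩
  · rintro ⟨i, hi, rfl⟩
    simpa using hi

theorem image_subset (h : CyclicModel N f) (S : Finset (Fin 7)) : f '' S ⊆ N.E := by
  rw [← h.2.1]; exact Set.image_subset_range _ _

theorem image_subset_image (h : CyclicModel N f) {S T : Finset (Fin 7)} :
    f '' (S : Set (Fin 7)) ⊆ f '' T ↔ S ⊆ T := by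
  rw [Set.image_subset_image_iff h.1, Finset.coe_subset]

theorem finite (h : CyclicModel N f) : N.E.Finite := h.2.1 ▸ Set.finite_range f

end CyclicModel

/-! ### Proper minors are graphic -/

/-- The graph with edge set `E` whose edge `f i` has ends `t i`; labels outside the range of `f` get
an irrelevant loop. -/
noncomputable def labelGraph {V α : Type u} [Inhabited V] (E : Set α) (f : Fin 7 → α)
    (t : Fin 7 → Sym2 V) : Graph V α :=
  ⟨E, Function.extend f t fun _ => Sym2.diag default⟩

/-- Evenness of a subset of `Fin 7` in the graph with ends `t`, in decidable form. -/
def EvenLabel {V : Type u} [DecidableEq V] (t : Fin 7 → Sym2 V) (S : Finset (Fin 7)) : Prop :=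
  ∀ v : V, Even ((S.filter fun i => v ∈ t i).card + (S.filter fun i => t i = Sym2.diag v).card)

instance {V : Type u} [DecidableEq V] [Fintype V] (t : Fin 7 → Sym2 V) (S : Finset (Fin 7)) :
    Decidable (EvenLabel t S) := by
  unfold EvenLabel; infer_instance

theorem evenSet_labelGraph {V α : Type u} [Inhabited V] [DecidableEq V] {E : Set α}
    {f : Fin 7 → α} (hf : f.Injective) (t : Fin 7 → Sym2 V) (S : Finset (Fin 7)) :
    (labelGraph E f t).EvenSet (f '' S) ↔ EvenLabel t S := by
  refine forall_congr' fun v => ?_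
  have hinc : ∀ i, (labelGraph E f t).inc (f i) = t i := by
    intro i
    simp only [labelGraph]
    exact hf.extend_apply _ _ _
  have hcount : ∀ p : Sym2 V → Prop, ∀ _ : DecidablePred p,
      {e ∈ f '' (S : Set (Fin 7)) | p ((labelGraph E f t).inc e)}.ncard =
        (S.filter fun i => p (t i)).card := by
    intro p _
    have : {e ∈ f '' (S : Set (Fin 7)) | p ((labelGraph E f t).inc e)} =
        f '' ((S.filter fun i => p (t i) : Finset (Fin 7)) : Set (Fin 7)) := by
      ext x
      simp only [Set.mem_ofPred_eq, Finset.coe_filter, Set.mem_image]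
      constructor
      · rintro ⟨⟨i, hi, rfl⟩, hp⟩
        exact ⟨i, ⟨hi, by rwa [hinc] at hp⟩, rfl⟩
      · rintro ⟨i, ⟨hi, hp⟩, rfl⟩
        exact ⟨⟨i, hi, rfl⟩, by rwa [hinc]⟩
    rw [this, Set.ncard_image_of_injective _ hf, Set.ncard_coe_finset]
  unfold Graph.deg
  rw [hcount (fun p => v ∈ p) inferInstance, hcount (fun p => p = Sym2.diag v) inferInstance]

instance : Inhabited (ULift.{u} (Fin 5)) := ⟨⟨0⟩⟩

/-- An edge between two of five vertices. -/
def ulEdge (a b : Fin 5) : Sym2 (ULift.{u} (Fin 5)) := s(⟨a⟩, ⟨b⟩)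

/-- The theta graph with paths `2 6`, `4 5`, `1 3` between the vertices `0` and `1`;
the label `0` is not used. -/
def thetaEnds : Fin 7 → Sym2 (ULift.{u} (Fin 5)) :=
  ![ulEdge 0 0, ulEdge 0 4, ulEdge 0 2, ulEdge 4 1, ulEdge 0 3, ulEdge 3 1, ulEdge 2 1]

/-- The complete graph on the vertices `0, 1, 2, 3`, whose stars are the four lines
`124`, `235`, `346`, `156` of the cyclic Fano plane avoiding `0`; the label `0` is not used. -/
def K4Ends : Fin 7 → Sym2 (ULift.{u} (Fin 5)) :=
  ![ulEdge 0 0, ulEdge 0 3, ulEdge 0 1, ulEdge 1 2, ulEdge 0 2, ulEdge 1 3, ulEdge 2 3]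

theorem theta_tet : ∀ i, 0 ∉ tet i → EvenLabel thetaEnds.{u} (tet i) := by decide +kernel

theorem theta_even : ∀ S : Finset (Fin 7), 0 ∉ S → S.Nonempty → EvenLabel thetaEnds.{u} S →
    ∃ i, tet i ⊆ S := by decide +kernel

theorem K4_tet : ∀ i, EvenLabel K4Ends.{u} ((tet i).erase 0) := by decide +kernel

theorem K4_even : ∀ S : Finset (Fin 7), 0 ∉ S → S.Nonempty → EvenLabel K4Ends.{u} S →
    ∃ i, tet i ⊆ insert 0 S := by decide +kernel

namespace CyclicModel

variable {α : Type u} {N : Matroid α} {f : Fin 7 → α}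

theorem hasEvenRep_delete (h : CyclicModel N f) : HasEvenRep (N ＼ {f 0}) := by
  refine ⟨_, labelGraph (N.E \ {f 0}) f thetaEnds, rfl, h.finite.subset sdiff_subset, fun X => ?_⟩
  rw [Matroid.delete_dep_iff, Matroid.delete_ground, subset_sdiff]
  constructor
  · rintro ⟨hX, hdisj⟩
    obtain ⟨S, rfl⟩ := h.exists_eq_image hX.subset_ground
    obtain ⟨i, hi⟩ := (h.2.2 S).1 hX
    refine ⟨⟨hX.subset_ground, hdisj⟩, f '' tet i, h.image_subset_image.2 hi,
      ⟨f (i + 2), i + 2, by simp [tet], rfl⟩, ?_⟩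
    rw [evenSet_labelGraph h.1]
    refine theta_tet i fun h0 => ?_
    exact Set.disjoint_singleton_right.1 hdisj ⟨0, hi h0, rfl⟩
  · rintro ⟨⟨hXE, hdisj⟩, Y, hYX, hne, hY⟩
    refine ⟨?_, hdisj⟩
    obtain ⟨S, rfl⟩ := h.exists_eq_image (hYX.trans hXE)
    rw [evenSet_labelGraph h.1] at hY
    have h0 : 0 ∉ S := fun h0 => Set.disjoint_singleton_right.1 hdisj (hYX ⟨0, h0, rfl⟩)
    obtain ⟨i, hi⟩ := theta_even S h0 (by simpa using hne) hY
    exact ((h.2.2 S).2 ⟨i, hi⟩).superset hYX hXE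

theorem hasEvenRep_contract (h : CyclicModel N f) : HasEvenRep (N ／ {f 0}) := by
  have h0E : f 0 ∈ N.E := h.2.1 ▸ Set.mem_range_self 0
  have hI : N.Indep {f 0} := by
    rw [← Matroid.not_dep_iff (by simpa using h0E)]
    have := (h.2.2 {0}).not
    simp only [Finset.coe_singleton, Set.image_singleton] at this
    rw [this]; decide
  refine ⟨_, labelGraph (N.E \ {f 0}) f K4Ends, rfl, h.finite.subset sdiff_subset, fun X => ?_⟩
  rw [hI.contract_dep_iff, Matroid.contract_ground, subset_sdiff]
  have hins : ∀ S : Finset (Fin 7), f '' S ∪ {f 0} = f '' ((insert 0 S : Finset (Fin 7)) : Set _) := by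
    intro S
    rw [Finset.coe_insert, Set.image_insert_eq, Set.union_singleton]
  constructor
  · rintro ⟨hdisj, hX⟩
    have hXE : X ⊆ N.E := subset_union_left.trans hX.subset_ground
    obtain ⟨S, rfl⟩ := h.exists_eq_image hXE
    rw [hins] at hX
    obtain ⟨i, hi⟩ := (h.2.2 _).1 hX
    have hne : ∀ i, ((tet i).erase 0).Nonempty := by decide
    refine ⟨⟨hXE, hdisj⟩, f '' ((tet i).erase 0 : Finset (Fin 7)), h.image_subset_image.2 ?_,
      by simpa only [Set.image_nonempty, Finset.coe_nonempty] using hne i, ?_⟩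
    · exact Finset.subset_insert_iff.1 hi
    · rw [evenSet_labelGraph h.1]
      exact K4_tet i
  · rintro ⟨⟨hXE, hdisj⟩, Y, hYX, hne, hY⟩
    refine ⟨hdisj, ?_⟩
    obtain ⟨S, rfl⟩ := h.exists_eq_image (hYX.trans hXE)
    rw [evenSet_labelGraph h.1] at hY
    have h0 : 0 ∉ S := fun h0 => Set.disjoint_singleton_right.1 hdisj (hYX ⟨0, h0, rfl⟩)
    obtain ⟨i, hi⟩ := K4_even S h0 (by simpa using hne) hY
    have := (h.2.2 _).2 ⟨i, hi⟩
    rw [← hins] at this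
    exact this.superset (union_subset_union_left _ hYX)
      (union_subset hXE (by simpa using h0E))

/-- A proper minor is a minor of some `N ＼ {e}` or `N ／ {e}`, and by rotation `e` may be taken to
have label `0`. -/
theorem isGraphic_of_isStrictMinor (h : CyclicModel N f) {M : Matroid α}
    (hM : IsStrictMinor M N) : IsGraphic M := by
  obtain ⟨⟨C, D, hCD⟩, hne⟩ := hM
  have hCD : M = N ／ C ＼ D := hCD
  subst hCD
  refine HasEvenRep.isGraphic ?_
  by_cases hC : Disjoint C N.E
  · rw [Matroid.contract_eq_self_iff.2 hC] at hne ⊢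
    have hD : ¬ Disjoint D N.E := fun hD => hne (Matroid.delete_eq_self_iff.2 hD)
    obtain ⟨e, heD, heE⟩ := Set.not_disjoint_iff.1 hD
    obtain ⟨g, hg, rfl⟩ := h.exists_label_zero heE
    rw [← Set.union_eq_self_of_subset_left (Set.singleton_subset_iff.2 heD),
      ← Matroid.delete_delete]
    exact hg.hasEvenRep_delete.delete _
  · obtain ⟨e, heC, heE⟩ := Set.not_disjoint_iff.1 hC
    obtain ⟨g, hg, rfl⟩ := h.exists_label_zero heE
    rw [← Set.union_eq_self_of_subset_left (Set.singleton_subset_iff.2 heC),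
      ← Matroid.contract_contract]
    exact (hg.hasEvenRep_contract.contract _).delete _

/-! ### The dual Fano matroid is not graphic -/

/-- A vertex star of a graph representing `N` would be orthogonal to all seven circuits, hence have
at least three edges. -/
theorem three_le_card : ∀ T : Finset (Fin 7), T.Nonempty → (∀ i, Even (tet i ∩ T).card) →
    3 ≤ T.card := by decide +kernel

theorem circuit (h : CyclicModel N f) (i : Fin 7) : Circuit N (f '' tet i) := by
  refine ⟨(h.2.2 _).2 ⟨i, Finset.Subset.rfl⟩, fun X hX hXi => ?_⟩
  obtain ⟨S, rfl⟩ := h.exists_eq_image hX.subset_ground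
  obtain ⟨j, hj⟩ := (h.2.2 S).1 hX
  have key : ∀ i j, tet j ⊆ tet i → j = i := by decide
  have := key i j (hj.trans (h.image_subset_image.1 hXi))
  subst this
  exact h.image_subset_image.2 hj

theorem not_isGraphic (h : CyclicModel N f) : ¬ IsGraphic N := by
  classical
  rintro ⟨V, G, hE, hcirc⟩
  -- there are no loops and no parallel edges, as there are no dependent sets of size at most two
  have hsmall : ∀ S : Finset (Fin 7), S.Nonempty → (∀ i, ¬ tet i ⊆ S) → ¬ G.EvenSet (f '' S) := by
    intro S hne hS hev
    obtain ⟨C, hC, hcyc⟩ := hev.exists_cycle (hE ▸ h.image_subset S) (Set.toFinite _)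
      (by simpa using hne)
    obtain ⟨i, hi⟩ := (h.2.2 S).1 (((hcirc C).2 hcyc).prop.superset hC (h.image_subset S))
    exact hS i hi
  have hloop : ∀ i, ¬ (G.inc (f i)).IsDiag := by
    intro i hd
    have key : ∀ i j, ¬ tet j ⊆ {i} := by decide
    exact hsmall {i} (by simp) (key i) (by simpa using G.evenSet_singleton_of_isDiag hd)
  have hinc : Function.Injective fun i => G.inc (f i) := by
    intro i j hij
    by_contra hne
    have key : ∀ i j k, ¬ tet k ⊆ {i, j} := by decide
    refine hsmall {i, j} (by simp) (key i j) ?_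
    have := G.evenSet_pair_of_parallel (h.1.ne hne) hij
    simpa [Set.image_pair] using this
  -- degrees are computed on labels
  have hdeg : ∀ (S : Finset (Fin 7)) (v : V),
      G.deg (f '' S) v = (S ∩ Finset.univ.filter fun i => v ∈ G.inc (f i)).card := by
    intro S v
    have h2 : {e ∈ f '' (S : Set (Fin 7)) | G.inc e = Sym2.diag v} = ∅ := by
      ext x
      simp only [Set.mem_ofPred_eq, Set.mem_empty_iff_false, iff_false]
      rintro ⟨⟨i, -, rfl⟩, hi⟩
      exact hloop i (by rw [hi]; exact Sym2.diag_isDiag v)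
    have h1 : {e ∈ f '' (S : Set (Fin 7)) | v ∈ G.inc e} =
        f '' ((S ∩ Finset.univ.filter fun i => v ∈ G.inc (f i) : Finset (Fin 7)) : Set _) := by
      ext x
      simp only [Set.mem_ofPred_eq, Finset.coe_inter, Finset.coe_filter, Finset.mem_univ, true_and,
        Set.mem_image, Set.mem_inter_iff]
      constructor
      · rintro ⟨⟨i, hi, rfl⟩, hp⟩
        exact ⟨i, ⟨hi, hp⟩, rfl⟩
      · rintro ⟨i, ⟨hi, hp⟩, rfl⟩
        exact ⟨⟨i, hi, rfl⟩, hp⟩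
    rw [Graph.deg, h1, h2, Set.ncard_image_of_injective _ h.1, Set.ncard_coe_finset]
    simp
  have huniv : f '' ((Finset.univ : Finset (Fin 7)) : Set (Fin 7)) = N.E := by
    rw [Finset.coe_univ, Set.image_univ, h.2.1]
  have hVf := G.finite_vertsOf h.finite
  have hge : ∀ v ∈ G.vertsOf N.E, 3 ≤ G.deg N.E v := by
    intro v hv
    rw [← huniv, hdeg, Finset.univ_inter]
    refine three_le_card _ ?_ fun i => ?_
    · obtain ⟨e, he, hve⟩ := hv
      obtain ⟨i, rfl⟩ := h.2.1 ▸ he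
      exact ⟨i, by simpa using hve⟩
    · rw [← hdeg]
      exact ((hcirc _).1 (h.circuit i)).evenSet v
  have hs := G.handshake h.finite.toFinset hVf.toFinset (by simp)
  have hcard : h.finite.toFinset.card = 7 := by
    rw [← Set.ncard_eq_toFinset_card _ h.finite, ← huniv, Set.ncard_image_of_injective _ h.1,
      Set.ncard_coe_finset]; rfl
  rw [h.finite.coe_toFinset, hcard] at hs
  have hsum : ∑ v ∈ hVf.toFinset, 3 ≤ ∑ v ∈ hVf.toFinset, G.deg N.E v :=
    Finset.sum_le_sum fun v hv => hge v (by simpa using hv)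
  simp only [Finset.sum_const, smul_eq_mul] at hsum
  have h4 : hVf.toFinset.card ≤ 4 := by omega
  -- seven distinct pairs cannot be formed from at most four vertices
  have hpairs : (Finset.univ.image fun i => G.inc (f i)) ⊆
      hVf.toFinset.offDiag.image Sym2.mk.uncurry := by
    intro p hp
    obtain ⟨i, -, rfl⟩ := Finset.mem_image.1 hp
    have hi : f i ∈ N.E := h.2.1 ▸ Set.mem_range_self i
    have hmem : ∀ x, x ∈ G.inc (f i) → x ∈ hVf.toFinset := fun x hx => by
      simpa using ⟨f i, hi, hx⟩
    have hnd := hloop i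
    revert hmem hnd
    induction G.inc (f i) with
    | _ a b =>
      intro hmem hnd
      exact Finset.mem_image.2 ⟨(a, b), Finset.mem_offDiag.2 ⟨hmem a (by simp), hmem b (by simp),
        by simpa using hnd⟩, rfl⟩
  have := Finset.card_le_card hpairs
  rw [Finset.card_image_of_injective _ hinc, Sym2.card_image_offDiag] at this
  have h6 := Nat.choose_le_choose 2 h4
  simp only [Finset.card_univ, Fintype.card_fin] at this
  have : Nat.choose 4 2 = 6 := by decide
  omega

/-! ### The dual Fano matroid is not bicircular lift -/

theorem not_isBicircularLift (h : CyclicModel N f) : ¬ IsBicircularLift N := by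
  rintro ⟨V, G, hE, hcirc⟩
  have htwo : ∀ X, N.Dep X → G.HasTwoCycles X := by
    intro X hX
    obtain ⟨C, hCX, hC⟩ := hX.exists_isCircuit_subset
    obtain ⟨C₁, C₂, h1, h2, h12, s1, s2⟩ := ((hcirc C).1 hC).prop.2
    exact ⟨C₁, C₂, h1, h2, h12, s1.trans hCX, s2.trans hCX⟩
  have hdep : ∀ X ⊆ N.E, G.HasTwoCycles X → N.Dep X := by
    intro X hXE hX
    have hXf := h.finite.subset hXE
    have hfam : {Y | Y ⊆ G.E ∧ G.HasTwoCycles Y}.Finite :=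
      (hE ▸ h.finite : G.E.Finite).finite_subsets.subset fun _ h => h.1
    obtain ⟨C, hCX, hC⟩ := hfam.exists_le_minimal (a := X) ⟨hE ▸ hXE, hX⟩
    exact ((hcirc C).2 hC).prop.superset hCX hXE
  -- deleting an element from a set with two cycles leaves a cycle
  have helim : ∀ X, N.Dep X → ∀ d, ∃ C, C ⊆ X \ {d} ∧ G.IsCycle C := by
    intro X hX d
    obtain ⟨C₁, C₂, h1, h2, h12, s1, s2⟩ := htwo X hX
    by_cases d1 : d ∈ C₁
    swap
    · exact ⟨C₁, Set.subset_sdiff_singleton s1 d1, h1⟩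
    by_cases d2 : d ∈ C₂
    swap
    · exact ⟨C₂, Set.subset_sdiff_singleton s2 d2, h2⟩
    have hsub : symmDiff C₁ C₂ ⊆ X \ {d} := by
      rintro x (⟨hx, hx'⟩ | ⟨hx, hx'⟩)
      · exact ⟨s1 hx, fun hxd => hx' (hxd ▸ d2)⟩
      · exact ⟨s2 hx, fun hxd => hx' (hxd ▸ d1)⟩
    obtain ⟨C, hC, hcyc⟩ := (h1.evenSet.symmDiff h2.evenSet h1.2.1 h2.2.1).exists_cycle
      ((hsub.trans sdiff_subset).trans (hE ▸ hX.subset_ground)) (h1.2.1.symmDiff h2.2.1)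
      (Set.symmDiff_nonempty.2 h12)
    exact ⟨C, hC.trans hsub, hcyc⟩
  have hlab : ∀ (i d : Fin 7), ∃ C, C ⊆ f '' ((tet i).erase d : Finset (Fin 7)) ∧ G.IsCycle C := by
    intro i d
    obtain ⟨C, hC, hcyc⟩ := helim _ (h.circuit i).prop (f d)
    refine ⟨C, hC.trans ?_, hcyc⟩
    rintro x ⟨⟨j, hj, rfl⟩, hx⟩
    exact ⟨j, Finset.mem_coe.2 (Finset.mem_erase.2 ⟨fun hjd => hx (by rw [hjd]; rfl), hj⟩), rfl⟩
  -- two cycles inside an independent set coincide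
  have huniq : ∀ S T U : Finset (Fin 7), S ⊆ U → T ⊆ U → (∀ i, ¬ tet i ⊆ U) → ∀ C C' : Set α,
      C ⊆ f '' S → C' ⊆ f '' T → G.IsCycle C → G.IsCycle C' →
        C = C' ∧ C ⊆ f '' ((S ∩ T : Finset (Fin 7)) : Set (Fin 7)) := by
    intro S T U hSU hTU hU C C' hC hC' hcyc hcyc'
    have heq : C = C' := by
      by_contra hne
      obtain ⟨i, hi⟩ := (h.2.2 U).1 (hdep _ (h.image_subset U) ⟨C, C', hcyc, hcyc', hne,
        hC.trans (h.image_subset_image.2 hSU), hC'.trans (h.image_subset_image.2 hTU)⟩)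
      exact hU i hi
    refine ⟨heq, ?_⟩
    rw [Finset.coe_inter, Set.image_inter h.1]
    have hCT : C ⊆ f '' T := heq ▸ hC'
    exact subset_inter hC hCT
  -- the triples `256` and `356` lie in the independent set `2356`, so their cycles coincide and lie
  -- in `56`; likewise `014` and `012` lie in `0124`, which gives a cycle inside `01`
  obtain ⟨A, hA, hAc⟩ := hlab 0 4
  obtain ⟨A', hA', hAc'⟩ := hlab 1 0
  obtain ⟨B, hB, hBc⟩ := hlab 2 6
  obtain ⟨B', hB', hBc'⟩ := hlab 3 5
  have hA56 := (huniq _ _ {2, 3, 5, 6} (by decide) (by decide) (by decide) _ _ hA hA' hAc hAc').2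
  have hB01 := (huniq _ _ {0, 1, 2, 4} (by decide) (by decide) (by decide) _ _ hB hB' hBc hBc').2
  have hAB := (huniq _ _ {0, 1, 5, 6} (by decide) (by decide) (by decide) _ _ hA56 hB01 hAc hBc).2
  obtain ⟨x, hx⟩ := hAc.2.2.1
  obtain ⟨i, hi, -⟩ := hAB hx
  revert i
  decide

end CyclicModel

theorem statement_5 {α : Type u} (N : Matroid α) (h : IsFano N✶) :
    ExcludedMinorBL N ∧ ¬ IsBicircularLift N := by
  obtain ⟨f, hf⟩ := exists_cyclicModel h
  exact ⟨⟨fun hBL => hBL.elim hf.not_isGraphic hf.not_isBicircularLift,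
    fun M hM => Or.inl (hf.isGraphic_of_isStrictMinor hM)⟩, hf.not_isBicircularLift⟩

end BLFormal
end

section
/- Let M be an excluded minor of \overline{BL}. Then either M is a connected matroid, or M is isomorphic to the direct sum U_{2,4} \oplus U_{0,1} of the uniform matroid U_{2,4} and a loop. -/
/-!
Cycles of a graph are the minimal nonempty *even* edge sets, those in which all degrees are even,
and even sets are closed under symmetric difference. Accordingly a set is dependent in `M(G)` if
it contains a nonempty even set, and in `L(G)` if it contains two of them (`isGraphic_iff`,
`isBicircularLift_iff`). All arguments are about even sets.

An excluded minor `M` is finite (`ExcludedMinorBL.finite`): an infinite circuit survives the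
contraction of one of its elements, and if all circuits are finite, then representations of the
finite restrictions can be glued along an ultrafilter.

Let `(X, Y)` be a 1-separation of `M`. Then `M` is the direct sum of `M ↾ X` and `M ↾ Y`. The two
summands are not both graphic, as `M` would be graphic (`rep_gDep_of_sep`). Let `M ↾ X` be
non-graphic; as a proper minor of `M` it is then `L(G)` for a graph `G`. The set `Y` contains a
circuit, since otherwise `M` would be bicircular lift, by adding `Y` to `G` as a star
(`rep_lDep_of_sep`).

As `L(G)` is not graphic, `G` has two intersecting cycles: if all cycles were pairwise disjoint,
`L(G)` would be the cycle matroid of a graph in which these cycles become parallel paths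
(`exists_graph_of_disjoint`). Two intersecting cycles with minimal union form a theta subgraph `T`
(`theta_even`). Some even set `D` is not contained in `T`, for otherwise `T` is the only circuit
of `L(G)` (`exists_graph_of_unique`); take `D` with `D \ T` minimal. Contract `T ∪ D` onto one edge
of each of the three paths of the theta and one edge of `D \ T`: the result is `U_{2,4}`
(`exists_core`). Contracting the circuit in `Y` to a loop gives a minor `U_{2,4} ⊕ U_{0,1}` of `M`
(`exists_minor`), which is neither graphic nor bicircular lift (`IsU24PlusLoop.not_inBL`).
Hence it equals `M`.
-/

open Set Matroid

universe u

namespace BLFormal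

/-! ### Cycles as minimal nonempty even edge sets -/

section Even

open scoped Classical

variable {V α : Type u}

/-- The indicator of `u = x`. -/
noncomputable def ind (u x : V) : ℕ := if u = x then 1 else 0

lemma ind_self (u : V) : ind u u = 1 := by simp [ind]

lemma ind_ne {u x : V} (h : u ≠ x) : ind u x = 0 := by simp [ind, h]

/-- The degree of `v` in the finite edge set `A`, when the edge `e` has the ends `a e` and `b e`.
A loop counts twice. -/
noncomputable def hdeg (a b : α → V) (A : Finset α) (v : V) : ℕ :=
  ∑ e ∈ A, (ind (a e) v + ind (b e) v)

/-- `A` is an element of the binary cycle space: all degrees are even. -/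
def Ev (a b : α → V) (A : Finset α) : Prop := ∀ v, Even (hdeg a b A v)

/-- `A` has boundary `u + v` over `GF(2)`; equivalently, `A` together with a new edge from `u`
to `v` is even. -/
def Jn (a b : α → V) (A : Finset α) (u v : V) : Prop :=
  ∀ x, Even (hdeg a b A x + ind u x + ind v x)

variable {a b : α → V}

lemma ev_empty : Ev a b ∅ := by intro v; simp [hdeg]

lemma hdeg_symmDiff (A B : Finset α) (v : V) :
    hdeg a b (symmDiff A B) v + 2 * hdeg a b (A ∩ B) v = hdeg a b A v + hdeg a b B v := by
  have h1 : hdeg a b (symmDiff A B) v = hdeg a b (A \ B) v + hdeg a b (B \ A) v := by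
    unfold hdeg
    rw [symmDiff_def, Finset.sup_eq_union, Finset.sum_union]
    exact disjoint_sdiff_sdiff
  have h2 : hdeg a b A v = hdeg a b (A ∩ B) v + hdeg a b (A \ B) v := by
    unfold hdeg; exact (Finset.sum_inter_add_sum_sdiff A B _).symm
  have h3 : hdeg a b B v = hdeg a b (A ∩ B) v + hdeg a b (B \ A) v := by
    unfold hdeg; rw [Finset.inter_comm]; exact (Finset.sum_inter_add_sum_sdiff B A _).symm
  omega

lemma ev_symmDiff {A B : Finset α} (hA : Ev a b A) (hB : Ev a b B) : Ev a b (symmDiff A B) := by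
  intro v
  have h := hdeg_symmDiff (a := a) (b := b) A B v
  have := hA v
  have := hB v
  grind

lemma hdeg_erase {A : Finset α} {e : α} (he : e ∈ A) (v : V) :
    hdeg a b A v = hdeg a b (A.erase e) v + ind (a e) v + ind (b e) v := by
  unfold hdeg
  rw [← Finset.sum_erase_add _ _ he, add_assoc]

lemma hdeg_insert {A : Finset α} {e : α} (he : e ∉ A) (v : V) :
    hdeg a b (insert e A) v = hdeg a b A v + ind (a e) v + ind (b e) v := by
  unfold hdeg
  rw [Finset.sum_insert he]; ring

lemma hdeg_mono {A B : Finset α} (h : A ⊆ B) (v : V) : hdeg a b A v ≤ hdeg a b B v :=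
  Finset.sum_le_sum_of_subset h

lemma hdeg_ne_zero {A : Finset α} {v : V} :
    hdeg a b A v ≠ 0 ↔ ∃ e ∈ A, a e = v ∨ b e = v := by
  unfold hdeg ind
  rw [Ne, Finset.sum_eq_zero_iff]
  push Not
  refine exists_congr fun e => and_congr_right fun _ => ?_
  by_cases h1 : a e = v <;> by_cases h2 : b e = v <;> simp [h1, h2]

/-- A minimal edge set with boundary `u + v` is a path: `u` and `v` have degree one and all other
vertices met by it have degree two. The second clause cuts the path at any of its vertices. -/
lemma path_aux : ∀ (n : ℕ) (Q : Finset α) (u v : V), Q.card = n → u ≠ v → Jn a b Q u v →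
    (∀ Q' ⊆ Q, Jn a b Q' u v → Q' = Q) →
    (∀ x, hdeg a b Q x = 0 ∨ hdeg a b Q x + ind u x + ind v x = 2) ∧
    (∀ x, hdeg a b Q x ≠ 0 → ∃ Q' ⊆ Q, Jn a b Q' x v) := by
  intro n
  induction n with
  | zero =>
    intro Q u v hQ huv hJ _
    obtain rfl := Finset.card_eq_zero.1 hQ
    have := hJ u
    simp [hdeg, ind_self, ind_ne huv.symm] at this
  | succ n ih =>
    intro Q u v hQ huv hJ hmin
    have hu0 : hdeg a b Q u ≠ 0 := by
      intro h
      have := hJ u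
      simp [h, ind_self, ind_ne huv.symm] at this
    obtain ⟨g, hg, w, hgw⟩ : ∃ g ∈ Q, ∃ w, ∀ x, ind (a g) x + ind (b g) x = ind u x + ind w x := by
      obtain ⟨g, hg, h | h⟩ := hdeg_ne_zero.1 hu0
      · exact ⟨g, hg, b g, fun x => by rw [h]⟩
      · exact ⟨g, hg, a g, fun x => by rw [h, add_comm]⟩
    have hd : ∀ x, hdeg a b Q x = hdeg a b (Q.erase g) x + (ind u x + ind w x) := by
      intro x
      rw [hdeg_erase hg, add_assoc, hgw]
    have hwu : w ≠ u := by
      rintro rfl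
      have : Q.erase g = Q := hmin _ (Finset.erase_subset _ _) (fun x => by
        have := hJ x
        have := hd x
        grind)
      exact Finset.notMem_erase g Q (by rw [this]; exact hg)
    have hJ1 : Jn a b (Q.erase g) w v := fun x => by
      have := hJ x
      have := hd x
      grind
    have hJins : ∀ Q' ⊆ Q.erase g, Jn a b Q' w v → insert g Q' = Q := by
      intro Q' hQ' h
      have hgQ' : g ∉ Q' := fun h => Finset.notMem_erase g Q (hQ' h)
      refine hmin _ ?_ ?_
      · exact Finset.insert_subset hg (hQ'.trans (Finset.erase_subset _ _))
      · intro x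
        have h1 := h x
        have h2 := hgw x
        rw [hdeg_insert hgQ']
        grind
    by_cases hwv : w = v
    · subst hwv
      have h1 : insert g ∅ = Q := hJins ∅ (Finset.empty_subset _) (fun x => by simp [hdeg])
      have h0 : ∀ x, hdeg a b Q x = ind u x + ind w x := by
        intro x
        rw [← hgw x, ← h1, hdeg_insert (Finset.notMem_empty _)]
        simp [hdeg]
      refine ⟨fun x => ?_, fun x hx => ?_⟩
      · rw [h0]
        by_cases h1 : u = x
        · subst h1; right; simp [ind_self, ind_ne hwu]
        · by_cases h2 : w = x
          · subst h2; right; simp [ind_self, ind_ne huv]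
          · left; simp [ind_ne h1, ind_ne h2]
      · by_cases h1 : u = x
        · subst h1; exact ⟨Q, subset_rfl, hJ⟩
        · by_cases h2 : w = x
          · subst h2; exact ⟨∅, Finset.empty_subset _, fun x => by simp [hdeg]⟩
          · exact absurd (by rw [h0]; simp [ind_ne h1, ind_ne h2]) hx
    · obtain ⟨ih1, ih2⟩ := ih (Q.erase g) w v (by rw [Finset.card_erase_of_mem hg, hQ]; rfl) hwv hJ1
        (fun Q' hQ' h => by
          have := hJins Q' hQ' h
          have hgQ' : g ∉ Q' := fun h => Finset.notMem_erase g Q (hQ' h)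
          rw [← this, Finset.erase_insert hgQ'])
      have hu1 : hdeg a b (Q.erase g) u = 0 := by
        by_contra h
        obtain ⟨Q', hQ', h'⟩ := ih2 u h
        have := hmin Q' (hQ'.trans (Finset.erase_subset _ _)) h'
        exact Finset.notMem_erase g Q (hQ' (this ▸ hg))
      have hw1 : hdeg a b (Q.erase g) w ≠ 0 := by
        intro h
        have := hJ1 w
        simp [h, ind_self, ind_ne (Ne.symm hwv)] at this
      refine ⟨fun x => ?_, fun x hx => ?_⟩
      · rw [hd]
        by_cases h1 : u = x
        · subst h1; right; simp [hu1, ind_self, ind_ne hwu, ind_ne huv.symm]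
        · have := ih1 x
          rw [ind_ne h1]
          by_cases h2 : w = x
          · subst h2; right; have := ih1 w; omega
          · rw [ind_ne h2] at *; omega
      · by_cases h1 : u = x
        · subst h1; exact ⟨Q, subset_rfl, hJ⟩
        · by_cases h2 : w = x
          · subst h2; exact ⟨_, Finset.erase_subset _ _, hJ1⟩
          · rw [hd, ind_ne h1, ind_ne h2] at hx
            obtain ⟨Q', hQ', h⟩ := ih2 x (by simpa using hx)
            exact ⟨Q', hQ'.trans (Finset.erase_subset _ _), h⟩

/-- A minimal nonempty even set. -/
def MinEv (a b : α → V) (C : Finset α) : Prop :=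
  C.Nonempty ∧ Ev a b C ∧ ∀ A ⊆ C, A.Nonempty → Ev a b A → A = C

lemma MinEv.hdeg_eq_two {C : Finset α} (hC : MinEv a b C) {x : V} (hx : hdeg a b C x ≠ 0) :
    hdeg a b C x = 2 := by
  obtain ⟨⟨e, he⟩, hev, hmin⟩ := hC
  by_cases hab : a e = b e
  · have h1 : ∀ x, hdeg a b {e} x = 2 * ind (a e) x := by
      intro x; simp only [hdeg, Finset.sum_singleton, ← hab]; ring
    have h2 := hmin {e} (by simpa using he) (Finset.singleton_nonempty _)
      (fun v => by rw [h1]; simp)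
    rw [← h2, h1] at hx ⊢
    by_cases h : a e = x
    · subst h; simp [ind_self]
    · simp [ind_ne h] at hx
  · have hJ : Jn a b (C.erase e) (a e) (b e) := fun x => by rw [← hdeg_erase he]; exact hev x
    obtain ⟨h1, -⟩ := path_aux _ (C.erase e) (a e) (b e) rfl hab hJ (fun Q' hQ' h => by
      have he' : e ∉ Q' := fun h => Finset.notMem_erase e C (hQ' h)
      have := hmin (insert e Q') (Finset.insert_subset he (hQ'.trans (Finset.erase_subset _ _)))
        (Finset.insert_nonempty _ _) (fun x => by rw [hdeg_insert he']; exact h x)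
      rw [← this, Finset.erase_insert he'])
    have h2 := h1 x
    rw [hdeg_erase he] at hx ⊢
    rcases h2 with h2 | h2
    · have h3 := hJ x
      rw [h2] at hx h3 ⊢
      by_cases ha : a e = x
      · subst ha; simp [ind_self, ind_ne (Ne.symm hab)] at h3
      · by_cases hb : b e = x
        · subst hb; simp [ind_self, ind_ne hab] at h3
        · simp [ind_ne ha, ind_ne hb] at hx
    · exact h2

lemma mem_vertsOf {G : Graph V α} (h : ∀ e, G.inc e = s(a e, b e)) {C : Finset α} {v : V} :
    v ∈ G.vertsOf ↑C ↔ hdeg a b C v ≠ 0 := by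
  rw [hdeg_ne_zero]
  simp only [Graph.vertsOf, Set.mem_ofPred_eq, h, Sym2.mem_iff, Finset.mem_coe]
  grind

lemma deg_eq_hdeg {G : Graph V α} (h : ∀ e, G.inc e = s(a e, b e)) (C : Finset α) (v : V) :
    G.deg ↑C v = hdeg a b C v := by
  unfold Graph.deg hdeg
  have h1 : {e ∈ (↑C : Set α) | v ∈ G.inc e} = ↑(C.filter fun e => v ∈ G.inc e) := by
    ext; simp
  have h2 : {e ∈ (↑C : Set α) | G.inc e = Sym2.diag v} = ↑(C.filter fun e => G.inc e = Sym2.diag v) := by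
    ext; simp
  rw [h1, h2, Set.ncard_coe_finset, Set.ncard_coe_finset, Finset.card_filter, Finset.card_filter,
    ← Finset.sum_add_distrib]
  refine Finset.sum_congr rfl fun e _ => ?_
  unfold ind
  rw [h e]
  simp only [Sym2.mem_iff, Sym2.diag, Sym2.eq_iff]
  by_cases h1 : a e = v <;> by_cases h2 : b e = v <;> (simp [h1, h2, eq_comm]; try grind)

lemma isCycle_iff {G : Graph V α} (h : ∀ e, G.inc e = s(a e, b e)) (C : Finset α) :
    G.IsCycle ↑C ↔ (↑C : Set α) ⊆ G.E ∧ MinEv a b C := by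
  constructor
  · rintro ⟨hE, -, hne, hdeg, hconn⟩
    refine ⟨hE, by simpa using hne, fun v => ?_, fun A hAC hA hev => ?_⟩
    · by_cases hv : BLFormal.hdeg a b C v = 0
      · rw [hv]; simp
      · rw [← deg_eq_hdeg h, hdeg v ((mem_vertsOf h).2 hv)]; simp
    · -- `A` uses every edge of `C` at each of its vertices, hence is all of `C` by connectivity.
      have hfull : ∀ v, BLFormal.hdeg a b A v ≠ 0 → ∀ e ∈ C, (a e = v ∨ b e = v) → e ∈ A := by
        intro v hv e he hev'
        by_contra heA
        have h1 : BLFormal.hdeg a b (insert e A) v ≤ BLFormal.hdeg a b C v :=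
          hdeg_mono (Finset.insert_subset he hAC) v
        have h2 : BLFormal.hdeg a b C v = 2 := by
          rw [← deg_eq_hdeg h]
          refine hdeg v ((mem_vertsOf h).2 ?_)
          have := hdeg_mono (a := a) (b := b) hAC v
          omega
        rw [hdeg_insert heA] at h1
        have h3 := hev v
        have h4 : 1 ≤ ind (a e) v + ind (b e) v := by
          rcases hev' with rfl | rfl <;> simp [ind_self]
        obtain ⟨k, hk⟩ := h3
        omega
      obtain ⟨f, hf⟩ := hA
      have hreach : ∀ v, Relation.ReflTransGen (G.AdjOn ↑C) (a f) v → BLFormal.hdeg a b A v ≠ 0 := by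
        intro v hv
        induction hv with
        | refl => exact hdeg_ne_zero.2 ⟨f, hf, Or.inl rfl⟩
        | tail _ hadj ih =>
          obtain ⟨e, he, hinc⟩ := hadj
          rw [h e, Sym2.eq_iff] at hinc
          refine hdeg_ne_zero.2 ⟨e, hfull _ ih e he ?_, ?_⟩ <;> grind
      refine Finset.Subset.antisymm hAC fun e he => ?_
      have h1 : a f ∈ G.vertsOf ↑C := (mem_vertsOf h).2 (hdeg_ne_zero.2 ⟨f, hAC hf, Or.inl rfl⟩)
      have h2 : a e ∈ G.vertsOf ↑C := (mem_vertsOf h).2 (hdeg_ne_zero.2 ⟨e, he, Or.inl rfl⟩)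
      exact hfull _ (hreach _ (hconn _ h1 _ h2)) e he (Or.inl rfl)
  · rintro ⟨hE, hC⟩
    refine ⟨hE, C.finite_toSet, by simpa using hC.1, fun v hv => ?_, fun u hu => ?_⟩
    · rw [deg_eq_hdeg h, hC.hdeg_eq_two ((mem_vertsOf h).1 hv)]
    · -- the component of `u` is even, hence everything
      set S := C.filter fun e => Relation.ReflTransGen (G.AdjOn ↑C) u (a e) with hS
      have hab : ∀ e ∈ C, (Relation.ReflTransGen (G.AdjOn ↑C) u (a e) ↔
          Relation.ReflTransGen (G.AdjOn ↑C) u (b e)) := by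
        intro e he
        exact ⟨fun hh => hh.tail ⟨e, he, h e⟩, fun hh => hh.tail ⟨e, he, by rw [h e, Sym2.eq_swap]⟩⟩
      have hSC : S = C := by
        refine hC.2.2 S (Finset.filter_subset _ _) ?_ ?_
        · obtain ⟨e, he, h1⟩ := hdeg_ne_zero.1 ((mem_vertsOf h).1 hu)
          refine ⟨e, Finset.mem_filter.2 ⟨he, ?_⟩⟩
          rcases h1 with h1 | h1
          · rw [h1]
          · rw [hab e he, h1]
        · intro x
          by_cases hx : Relation.ReflTransGen (G.AdjOn ↑C) u x
          · have : hdeg a b S x = hdeg a b C x := by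
              unfold hdeg
              refine Finset.sum_subset (Finset.filter_subset _ _) fun e he he' => ?_
              have h1 : a e ≠ x := by
                rintro rfl; exact he' (Finset.mem_filter.2 ⟨he, hx⟩)
              have h2 : b e ≠ x := by
                rintro rfl; exact he' (Finset.mem_filter.2 ⟨he, (hab e he).2 hx⟩)
              simp [ind_ne h1, ind_ne h2]
            rw [this]; exact hC.2.1 x
          · have : hdeg a b S x = 0 := by
              by_contra h0
              obtain ⟨e, he, h1⟩ := hdeg_ne_zero.1 h0
              obtain ⟨he, he'⟩ := Finset.mem_filter.1 he
              rcases h1 with rfl | rfl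
              · exact hx he'
              · exact hx ((hab e he).1 he')
            rw [this]; simp
      intro v hv
      obtain ⟨e, he, h1⟩ := hdeg_ne_zero.1 ((mem_vertsOf h).1 hv)
      rw [← hSC] at he
      obtain ⟨he, he'⟩ := Finset.mem_filter.1 he
      rcases h1 with rfl | rfl
      · exact he'
      · exact (hab e he).1 he'

/-! ### Dependence in graphic and bicircular lift matroids -/

/-- `C` contains a nonempty member of the family `P`. -/
def GDep (P : Finset α → Prop) (C : Finset α) : Prop := ∃ A ⊆ C, A.Nonempty ∧ P A

/-- `C` contains two distinct nonempty members of the family `P`. -/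
def LDep (P : Finset α → Prop) (C : Finset α) : Prop :=
  ∃ A ⊆ C, ∃ B ⊆ C, A.Nonempty ∧ B.Nonempty ∧ A ≠ B ∧ P A ∧ P B

lemma exists_minEv {C : Finset α} (h : GDep (Ev a b) C) : ∃ A ⊆ C, MinEv a b A := by
  induction C using Finset.strongInduction with
  | H C ih =>
    obtain ⟨A, hAC, hA, hev⟩ := h
    by_cases hB : ∃ B ⊂ A, B.Nonempty ∧ Ev a b B
    · obtain ⟨B, hBA, hBne, hBev⟩ := hB
      obtain ⟨A', hA', h'⟩ := ih B (lt_of_lt_of_le hBA hAC) ⟨B, subset_rfl, hBne, hBev⟩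
      exact ⟨A', hA'.trans (hBA.subset.trans hAC), h'⟩
    · refine ⟨A, hAC, hA, hev, fun B hBA hBne hBev => ?_⟩
      by_contra hne
      exact hB ⟨B, lt_of_le_of_ne hBA hne, hBne, hBev⟩

lemma exists_two_minEv {C : Finset α} (h : LDep (Ev a b) C) :
    ∃ A ⊆ C, ∃ B ⊆ C, A ≠ B ∧ MinEv a b A ∧ MinEv a b B := by
  obtain ⟨A, hA, B, hB, hAne, hBne, hAB, hAev, hBev⟩ := h
  by_contra hcon
  push Not at hcon
  obtain ⟨D, hDA, hD⟩ := exists_minEv ⟨A, subset_rfl, hAne, hAev⟩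
  -- if `D` is the only minimal even set in `C`, it is the only nonempty even set in `C`
  have key : ∀ F ⊆ C, F.Nonempty → Ev a b F → F = D := by
    intro F hF hFne hFev
    obtain ⟨D', hD'F, hD'⟩ := exists_minEv ⟨F, subset_rfl, hFne, hFev⟩
    have hDD' : D' = D := by
      by_contra hne
      exact hcon D' (hD'F.trans hF) D (hDA.trans hA) hne hD' hD
    subst hDD'
    by_contra hne
    have h1 : (F \ D').Nonempty := by
      rw [Finset.sdiff_nonempty]
      exact fun h => hne (Finset.Subset.antisymm h hD'F)
    have h2 : Ev a b (F \ D') := by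
      have := ev_symmDiff hFev hD'.2.1
      rwa [symmDiff_def, Finset.sdiff_eq_empty_iff_subset.2 hD'F, ← Finset.bot_eq_empty,
        sup_bot_eq] at this
    obtain ⟨D'', hD''F, hD''⟩ := exists_minEv ⟨F \ D', subset_rfl, h1, h2⟩
    have h3 : D'' = D' := by
      by_contra hne
      exact hcon D'' (hD''F.trans (Finset.sdiff_subset.trans hF)) D' (hDA.trans hA) hne hD'' hD
    subst h3
    obtain ⟨x, hx⟩ := hD''.1
    exact (Finset.mem_sdiff.1 (hD''F hx)).2 hx
  exact hAB ((key A hA hAne hAev).trans (key B hB hBne hBev).symm)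

/-- All circuits are finite. -/
def FinCirc (N : Matroid α) : Prop := ∀ C, Circuit N C → C.Finite

/-- `N` is represented by a graph with end maps `a` and `b`, where `Q` (which is `GDep` or `LDep`)
says how the dependent sets of `N` arise from the even sets of that graph. -/
def Rep (Q : (Finset α → Prop) → Finset α → Prop) (N : Matroid α) : Prop :=
  FinCirc N ∧ ∃ (V : Type u) (a b : α → V), ∀ C : Finset α, (↑C : Set α) ⊆ N.E →
    (N.Dep ↑C ↔ Q (Ev a b) C)

lemma circuits_iff (N : Matroid α) (Q : Finset α → Prop) :
    (∀ C, Circuit N C ↔ Minimal (fun Y => Y ⊆ N.E ∧ ∃ F : Finset α, (↑F : Set α) ⊆ Y ∧ Q F) C) ↔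
    FinCirc N ∧ ∀ C : Finset α, (↑C : Set α) ⊆ N.E →
      (N.Dep ↑C ↔ ∃ F ⊆ C, Q F) := by
  constructor
  · intro h
    have hfin : FinCirc N := by
      intro C hC
      obtain ⟨⟨hCE, F, hF, hQ⟩, hmin⟩ := (h C).1 hC
      exact F.finite_toSet.subset (hmin ⟨hF.trans hCE, F, subset_rfl, hQ⟩ hF)
    refine ⟨hfin, fun C hCE => ⟨fun hdep => ?_, ?_⟩⟩
    · obtain ⟨D, hDC, hD⟩ := hdep.exists_isCircuit_subset
      obtain ⟨⟨hCE, F, hF, hQ⟩, hmin⟩ := (h D).1 hD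
      exact ⟨F, by exact_mod_cast hF.trans hDC, hQ⟩
    · rintro ⟨F, hFC, hQ⟩
      have hFC' : (↑F : Set α) ⊆ ↑C := by exact_mod_cast hFC
      obtain ⟨D, hDC, hD⟩ := (C.finite_toSet.finite_subsets.subset
        (t := {Y | Y ⊆ ↑C ∧ Y ⊆ N.E ∧ ∃ F : Finset α, (↑F : Set α) ⊆ Y ∧ Q F})
        (fun Y hY => hY.1)).exists_le_minimal (a := (↑C : Set α)) ⟨subset_rfl, hCE, F, hFC', hQ⟩
      refine ((h D).2 ⟨hD.1.2, fun Y hY hYD => ?_⟩).1.superset hDC hCE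
      exact hD.2 ⟨hYD.trans hDC, hY⟩ hYD
  · rintro ⟨hfin, h⟩ C
    have : N.Dep = (fun Y => Y ⊆ N.E ∧ ∃ F : Finset α, (↑F : Set α) ⊆ Y ∧ Q F) := by
      funext Y
      refine propext ⟨fun hY => ⟨hY.subset_ground, ?_⟩, ?_⟩
      · obtain ⟨D, hDY, hD⟩ := hY.exists_isCircuit_subset
        have hDf := hfin D hD
        obtain ⟨D, rfl⟩ := hDf.exists_finset_coe
        obtain ⟨F, hF, hQ⟩ := (h D hD.subset_ground).1 hD.dep
        exact ⟨F, (Finset.coe_subset.2 hF).trans hDY, hQ⟩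
      · rintro ⟨hYE, F, hF, hQ⟩
        exact ((h F (hF.trans hYE)).2 ⟨F, subset_rfl, hQ⟩).superset hF hYE
    unfold Circuit
    rw [this]

end Even

/-! ### Representations of matroids by graphs -/

section Representation

open scoped Classical

variable {V α : Type u}

lemma LDep.mono {P : Finset α → Prop} {C C' : Finset α} (h : C ⊆ C') (hC : LDep P C) :
    LDep P C' := by
  obtain ⟨A, hA, B, hB, h'⟩ := hC
  exact ⟨A, hA.trans h, B, hB.trans h, h'⟩

lemma exists_ends (G : Graph V α) : ∃ a b : α → V, ∀ e, G.inc e = s(a e, b e) := by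
  have : ∀ e, ∃ x y, G.inc e = s(x, y) := fun e => by
    induction G.inc e with
    | _ x y => exact ⟨x, y, rfl⟩
  choose a b h using this
  exact ⟨a, b, h⟩

lemma isCycle_iff_minimal {G : Graph V α} {a b : α → V} (h : ∀ e, G.inc e = s(a e, b e))
    (C : Set α) : G.IsCycle C ↔ Minimal (fun Y => Y ⊆ G.E ∧ ∃ F : Finset α, (↑F : Set α) ⊆ Y ∧
      (F.Nonempty ∧ Ev a b F)) C := by
  constructor
  · intro hC
    obtain ⟨C, rfl⟩ := hC.2.1.exists_finset_coe
    obtain ⟨hE, hmin⟩ := (isCycle_iff h C).1 hC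
    refine ⟨⟨hE, C, subset_rfl, hmin.1, hmin.2.1⟩, ?_⟩
    rintro Y ⟨hYE, F, hFY, hF, hev⟩ hYC
    have : F = C := hmin.2.2 F (Finset.coe_subset.1 (hFY.trans hYC)) hF hev
    exact this ▸ hFY
  · rintro ⟨⟨hE, F, hFC, hF, hev⟩, hmin⟩
    obtain ⟨A, hA, hAmin⟩ := exists_minEv ⟨F, subset_rfl, hF, hev⟩
    have hAC : (↑A : Set α) ⊆ C := (Finset.coe_subset.2 hA).trans hFC
    have := hmin ⟨hAC.trans hE, A, subset_rfl, hAmin.1, hAmin.2.1⟩ hAC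
    obtain rfl := Set.Subset.antisymm this hAC
    exact (isCycle_iff h A).2 ⟨hE, hAmin⟩

lemma hasTwoCycles_iff {G : Graph V α} {a b : α → V} (h : ∀ e, G.inc e = s(a e, b e))
    {Y : Set α} (hY : Y ⊆ G.E) :
    G.HasTwoCycles Y ↔ ∃ F : Finset α, (↑F : Set α) ⊆ Y ∧ LDep (Ev a b) F := by
  constructor
  · rintro ⟨A, B, hA, hB, hne, hAY, hBY⟩
    obtain ⟨A, rfl⟩ := hA.2.1.exists_finset_coe
    obtain ⟨B, rfl⟩ := hB.2.1.exists_finset_coe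
    obtain ⟨-, hA⟩ := (isCycle_iff h A).1 hA
    obtain ⟨-, hB⟩ := (isCycle_iff h B).1 hB
    exact ⟨A ∪ B, by simp [hAY, hBY], A, Finset.subset_union_left, B, Finset.subset_union_right,
      hA.1, hB.1, fun h => hne (by rw [h]), hA.2.1, hB.2.1⟩
  · rintro ⟨F, hFY, hF⟩
    obtain ⟨A, hA, B, hB, hne, hAm, hBm⟩ := exists_two_minEv hF
    have hA' := (Finset.coe_subset.2 hA).trans hFY
    have hB' := (Finset.coe_subset.2 hB).trans hFY
    exact ⟨A, B, (isCycle_iff h A).2 ⟨hA'.trans hY, hAm⟩, (isCycle_iff h B).2 ⟨hB'.trans hY, hBm⟩,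
      fun h => hne (Finset.coe_injective h), hA', hB'⟩

lemma isGraphic_iff (N : Matroid α) : IsGraphic N ↔ Rep GDep N := by
  constructor
  · rintro ⟨V, G, hE, hG⟩
    obtain ⟨a, b, h⟩ := exists_ends G
    obtain ⟨h1, h2⟩ := (circuits_iff N (fun F => F.Nonempty ∧ Ev a b F)).1 (fun C => by
      rw [hG, isCycle_iff_minimal h, hE])
    exact ⟨h1, V, a, b, h2⟩
  · rintro ⟨h1, V, a, b, h2⟩
    have h := (circuits_iff N (fun F => F.Nonempty ∧ Ev a b F)).2 ⟨h1, h2⟩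
    exact ⟨V, ⟨N.E, fun e => s(a e, b e)⟩, rfl, fun C => by
      rw [h, isCycle_iff_minimal (a := a) (b := b) (fun _ => rfl)]⟩

lemma isBicircularLift_iff (N : Matroid α) : IsBicircularLift N ↔ Rep LDep N := by
  have hmon : ∀ (P : Finset α → Prop) C, (∃ F ⊆ C, LDep P F) ↔ LDep P C :=
    fun P C => ⟨fun ⟨F, hF, h⟩ => h.mono hF, fun h => ⟨C, subset_rfl, h⟩⟩
  have hmin : ∀ {V : Type u} (G : Graph V α) (a b : α → V), (∀ e, G.inc e = s(a e, b e)) →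
      ∀ C, (G.LiftCircuit C ↔ Minimal (fun Y => Y ⊆ G.E ∧ ∃ F : Finset α, (↑F : Set α) ⊆ Y ∧
      LDep (Ev a b) F) C) := by
    intro V G a b h C
    have : (fun Y => Y ⊆ G.E ∧ G.HasTwoCycles Y) = (fun Y => Y ⊆ G.E ∧
        ∃ F : Finset α, (↑F : Set α) ⊆ Y ∧ LDep (Ev a b) F) := by
      funext Y
      exact propext (and_congr_right fun hY => hasTwoCycles_iff h hY)
    unfold Graph.LiftCircuit
    rw [this]
  constructor
  · rintro ⟨V, G, hE, hG⟩
    obtain ⟨a, b, h⟩ := exists_ends G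
    obtain ⟨h1, h2⟩ := (circuits_iff N (LDep (Ev a b))).1 (fun C => by
      rw [hG, hmin G a b h, hE])
    exact ⟨h1, V, a, b, fun C hC => by rw [h2 C hC, hmon]⟩
  · rintro ⟨h1, V, a, b, h2⟩
    have h := (circuits_iff N (LDep (Ev a b))).2 ⟨h1, fun C hC => by rw [h2 C hC, hmon]⟩
    exact ⟨V, ⟨N.E, fun e => s(a e, b e)⟩, rfl, fun C => by
      rw [h, hmin _ a b (fun _ => rfl)]⟩

lemma Rep.restrict {Q : (Finset α → Prop) → Finset α → Prop} {N : Matroid α} (h : Rep Q N)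
    {R : Set α} (hR : R ⊆ N.E) : Rep Q (N ↾ R) := by
  obtain ⟨h1, V, a, b, h2⟩ := h
  refine ⟨fun C hC => h1 C ((restrict_isCircuit_iff hR).1 hC).1, V, a, b, fun C hC => ?_⟩
  have hC : (↑C : Set α) ⊆ R := hC
  rw [← h2 C (hC.trans hR), restrict_dep_iff, Dep]
  simp [hC, hC.trans hR]

/-! ### Compactness -/

lemma ev_iff {a b : α → V} {A : Finset α} :
    Ev a b A ↔ ∀ e ∈ A, Even (hdeg a b A (a e)) ∧ Even (hdeg a b A (b e)) := by
  refine ⟨fun h e _ => ⟨h _, h _⟩, fun h v => ?_⟩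
  by_cases hv : hdeg a b A v = 0
  · rw [hv]; simp
  · obtain ⟨e, he, rfl | rfl⟩ := hdeg_ne_zero.1 hv
    · exact (h e he).1
    · exact (h e he).2

/-- Evenness depends only on which half-edges share a vertex. -/
lemma ev_congr {V' : Type u} {a b : α → V} {a' b' : α → V'} {A : Finset α}
    (h : ∀ e ∈ A, ∀ f ∈ A, (a e = a f ↔ a' e = a' f) ∧ (a e = b f ↔ a' e = b' f) ∧
      (b e = b f ↔ b' e = b' f)) : Ev a b A ↔ Ev a' b' A := by
  rw [ev_iff, ev_iff]
  refine forall₂_congr fun e he => ?_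
  have h1 : hdeg a b A (a e) = hdeg a' b' A (a' e) := by
    refine Finset.sum_congr rfl fun f hf => ?_
    have h1 := h f hf e he
    have h2 := h e he f hf
    unfold ind
    simp only [h1.1, eq_comm (a := b f), eq_comm (a := b' f), h2.2.1]
  have h2 : hdeg a b A (b e) = hdeg a' b' A (b' e) := by
    refine Finset.sum_congr rfl fun f hf => ?_
    have h1 := h f hf e he
    unfold ind
    simp only [h1.2.1, h1.2.2]
  rw [h1, h2]

/-- Representability of a matroid with finite circuits is determined by its finite restrictions.
The vertices of the representing graph are the half-edges, two of which are identified if they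
are identified in the chosen representations of almost all finite restrictions, with respect to
an ultrafilter on the finite sets. -/
lemma rep_of_finite_restrict {Q : (Finset α → Prop) → Finset α → Prop}
    (hQ : ∀ P P' C, (∀ A ⊆ C, P A ↔ P' A) → (Q P C ↔ Q P' C)) {M : Matroid α} (hfin : FinCirc M)
    (h : ∀ F : Finset α, (↑F : Set α) ⊆ M.E → Rep Q (M ↾ ↑F)) : Rep Q M := by
  have h' : ∀ F : Finset α, ∃ (V : Type u) (a b : α → V), ∀ C ⊆ F, (↑C : Set α) ⊆ M.E →
      (M.Dep ↑C ↔ Q (Ev a b) C) := by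
    intro F
    obtain ⟨-, V, a, b, hab⟩ := h (F.filter (· ∈ M.E)) (by intro x; simp)
    refine ⟨V, a, b, fun C hCF hCE => ?_⟩
    have hC : (↑C : Set α) ⊆ ↑(F.filter (· ∈ M.E)) := by
      intro x hx
      simpa using ⟨hCF hx, hCE hx⟩
    rw [← hab C hC, restrict_dep_iff, Dep]
    simp only [hC, hCE, and_true]
  choose W a b hab using h'
  let 𝓤 : Ultrafilter (Finset α) := Ultrafilter.of Filter.atTop
  let hh : ∀ F, α × Bool → W F := fun F x => if x.2 then a F x.1 else b F x.1
  let S : Setoid (α × Bool) :=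
    { r := fun x y => ∀ᶠ F in (𝓤 : Filter (Finset α)), hh F x = hh F y
      iseqv := ⟨fun x => Filter.Eventually.of_forall fun _ => rfl,
        fun h => h.mono fun _ h => h.symm,
        fun h h' => (h.and h').mono fun _ h => h.1.trans h.2⟩ }
  have hS : ∀ x y : α × Bool, (Quotient.mk S x = Quotient.mk S y ↔
      ∀ᶠ F in (𝓤 : Filter (Finset α)), hh F x = hh F y) := fun x y => Quotient.eq (r := S)
  refine ⟨hfin, Quotient S, fun e => Quotient.mk S (e, true), fun e => Quotient.mk S (e, false),
    fun C hCE => ?_⟩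
  have hpair : ∀ x y : α × Bool, ∀ᶠ F in (𝓤 : Filter (Finset α)),
      (hh F x = hh F y ↔ Quotient.mk S x = Quotient.mk S y) := by
    intro x y
    by_cases hxy : Quotient.mk S x = Quotient.mk S y
    · exact ((hS x y).1 hxy).mono fun F hF => by simp [hF, hxy]
    · have := Ultrafilter.eventually_not.2 (fun h => hxy ((hS x y).2 h))
      exact this.mono fun F hF => by simp [hF, hxy]
  have hall : ∀ᶠ F in (𝓤 : Filter (Finset α)), ∀ e ∈ C, ∀ f ∈ C, ∀ i j : Bool,
      (hh F (e, i) = hh F (f, j) ↔ Quotient.mk S (e, i) = Quotient.mk S (f, j)) := by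
    simp only [Filter.eventually_all_finset, Filter.eventually_all]
    exact fun e _ f _ i j => hpair _ _
  have hge : ∀ᶠ F in (𝓤 : Filter (Finset α)), C ⊆ F :=
    (Ultrafilter.of_le Filter.atTop) (Filter.eventually_ge_atTop C)
  obtain ⟨F, hF1, hF2⟩ := (hall.and hge).exists
  rw [hab F C hF2 hCE]
  refine hQ _ _ _ fun A hA => ev_congr fun e he f hf => ?_
  exact ⟨hF1 e (hA he) f (hA hf) true true, hF1 e (hA he) f (hA hf) true false,
    hF1 e (hA he) f (hA hf) false false⟩

lemma gDep_congr (P P' : Finset α → Prop) (C : Finset α) (h : ∀ A ⊆ C, P A ↔ P' A) :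
    GDep P C ↔ GDep P' C :=
  exists_congr fun A => and_congr_right fun hA => and_congr_right fun _ => h A hA

lemma lDep_congr (P P' : Finset α → Prop) (C : Finset α) (h : ∀ A ⊆ C, P A ↔ P' A) :
    LDep P C ↔ LDep P' C := by
  refine exists_congr fun A => and_congr_right fun hA => exists_congr fun B =>
    and_congr_right fun hB => ?_
  rw [h A hA, h B hB]

lemma isStrictMinor_of_ground {M : Matroid α} {C D : Set α} (h : (del (con M C) D).E ≠ M.E) :
    IsStrictMinor (del (con M C) D) M := ⟨⟨C, D, rfl⟩, fun h' => h (by rw [h'])⟩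

lemma isStrictMinor_restrict {M : Matroid α} {R : Set α} (hR : R ⊂ M.E) :
    IsStrictMinor (M ↾ R) M := by
  refine ⟨⟨∅, M.E \ R, ?_⟩, fun h => hR.ne (congrArg Matroid.E h)⟩
  change M ↾ R = (M ／ ∅) ＼ (M.E \ R)
  rw [contract_empty, delete, sdiff_sdiff_cancel_left hR.subset]

lemma Rep.inBL_iff (N : Matroid α) : InBL N ↔ Rep GDep N ∨ Rep LDep N := by
  rw [InBL, isGraphic_iff, isBicircularLift_iff]

/-- Excluded minors are finite. An infinite circuit would survive contraction of an element, and
otherwise representations of the finite restrictions yield a representation of the matroid. -/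
lemma ExcludedMinorBL.finite {M : Matroid α} (hM : ExcludedMinorBL M) : M.E.Finite := by
  by_contra hinf
  have hfin : FinCirc M := by
    intro C hC
    by_contra hCinf
    have hC : M.IsCircuit C := hC
    obtain ⟨e, he⟩ := hC.nonempty
    have hloop : M.Indep {e} := by
      refine hC.ssubset_indep ?_
      refine ssubset_of_subset_of_ne (by simpa using he) ?_
      rintro rfl
      exact hCinf (Set.finite_singleton e)
    have hmin : IsStrictMinor (M ／ {e}) M := by
      refine ⟨⟨{e}, ∅, ?_⟩, fun h => ?_⟩
      · change M ／ {e} = (M ／ {e}) ＼ ∅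
        simp
      · have : e ∈ (M ／ {e}).E := by rw [h]; exact hC.subset_ground he
        simp at this
    have hcirc : (M ／ {e}).IsCircuit (C \ {e}) := by
      rw [isCircuit_iff]
      refine ⟨?_, fun D hD hDC => ?_⟩
      · rw [hloop.contract_dep_iff]
        refine ⟨disjoint_sdiff_left, ?_⟩
        rw [sdiff_union_of_subset (by simpa using he)]
        exact hC.dep
      · rw [hloop.contract_dep_iff] at hD
        have : D ∪ {e} = C := hC.eq_of_dep_subset hD.2
          (Set.union_subset (hDC.trans sdiff_subset) (by simpa using he))
        rw [← this, union_sdiff_right, hD.1.sdiff_eq_left]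
    have hfc : FinCirc (M ／ {e}) := by
      rcases (Rep.inBL_iff _).1 (hM.2 _ hmin) with h | h <;> exact h.1
    have := hfc _ hcirc
    exact hCinf ((this.union (Set.finite_singleton e)).subset (by simp))
  have hsub : ∀ F : Finset α, (↑F : Set α) ⊆ M.E → Rep GDep (M ↾ ↑F) ∨ Rep LDep (M ↾ ↑F) := by
    intro F hF
    refine (Rep.inBL_iff _).1 (hM.2 _ (isStrictMinor_restrict (ssubset_of_subset_of_ne hF ?_)))
    rintro h
    exact hinf (h ▸ F.finite_toSet)
  refine hM.1 ((Rep.inBL_iff M).2 ?_)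
  by_cases hG : ∀ F : Finset α, (↑F : Set α) ⊆ M.E → Rep GDep (M ↾ ↑F)
  · exact Or.inl (rep_of_finite_restrict gDep_congr hfin hG)
  · right
    push Not at hG
    obtain ⟨F₀, hF₀, hn⟩ := hG
    refine rep_of_finite_restrict lDep_congr hfin fun F hF => ?_
    have hU : (↑(F₀ ∪ F) : Set α) ⊆ M.E := by simp [hF₀, hF]
    have key : ∀ (Q : (Finset α → Prop) → Finset α → Prop) (F' : Finset α), F' ⊆ F₀ ∪ F →
        Rep Q (M ↾ ↑(F₀ ∪ F)) → Rep Q (M ↾ ↑F') := by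
      intro Q F' hF' h
      have h1 : (↑F' : Set α) ⊆ ↑(F₀ ∪ F) := Finset.coe_subset.2 hF'
      have := h.restrict (R := ↑F') h1
      rwa [restrict_restrict_eq _ h1] at this
    rcases hsub _ hU with h | h
    · exact absurd (key _ _ Finset.subset_union_left h) hn
    · exact key _ _ Finset.subset_union_right h

end Representation

/-! ### Direct sums -/

section DirectSum

open scoped Classical

variable {V α : Type u}

lemma encard_le_of_isBase {M : Matroid α} {I B : Set α} (hI : M.Indep I) (hB : M.IsBase B) :
    I.encard ≤ B.encard := by
  obtain ⟨B', hB', hIB⟩ := hI.exists_isBase_superset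
  exact (encard_le_encard hIB).trans (hB'.encard_eq_encard_of_isBase hB).le

/-- Across a 1-separation independent sets combine freely. -/
lemma IsKSep.indep_union {M : Matroid α} (hfin : M.E.Finite) {X Y : Set α} (h : IsKSep M 1 X Y)
    {I J : Set α} (hI : M.Indep I) (hIX : I ⊆ X) (hJ : M.Indep J) (hJY : J ⊆ Y) :
    M.Indep (I ∪ J) := by
  obtain ⟨hE, hd, -, -, hr⟩ := h
  have hX : X ⊆ M.E := hE ▸ subset_union_left
  have hY : Y ⊆ M.E := hE ▸ subset_union_right
  obtain ⟨I', hI', hII⟩ := hI.subset_isBasis_of_subset hIX hX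
  obtain ⟨J', hJ', hJJ⟩ := hJ.subset_isBasis_of_subset hJY hY
  have h1 : I'.encard ≤ eRk M X :=
    le_iSup (fun I : {I : Set α // M.Indep I ∧ I ⊆ X} => (I : Set α).encard)
      ⟨I', hI'.indep, hI'.subset⟩
  have h2 : J'.encard ≤ eRk M Y :=
    le_iSup (fun I : {I : Set α // M.Indep I ∧ I ⊆ Y} => (I : Set α).encard)
      ⟨J', hJ'.indep, hJ'.subset⟩
  have hsp : M.Spanning (I' ∪ J') := by
    rw [spanning_iff_closure_eq (union_subset hI'.indep.subset_ground hJ'.indep.subset_ground),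
      closure_union_congr_left hI'.closure_eq_closure,
      closure_union_congr_right hJ'.closure_eq_closure, hE, closure_ground]
  obtain ⟨B, hB, hBs⟩ := hsp.exists_isBase_subset
  have h3 : eRank M ≤ B.encard := iSup_le fun I => encard_le_of_isBase I.2.1 hB
  have h4 : (I' ∪ J').encard ≤ B.encard := by
    refine (encard_union_le _ _).trans ((add_le_add h1 h2).trans (hr.trans ?_))
    simpa using h3
  have h5 : B = I' ∪ J' := (hfin.subset (hB.subset_ground)).eq_of_subset_of_encard_le hBs h4
  exact (h5 ▸ hB.indep).subset (union_subset_union hII hJJ)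

lemma IsKSep.dep_iff {M : Matroid α} (hfin : M.E.Finite) {X Y : Set α} (h : IsKSep M 1 X Y)
    {C : Set α} (hC : C ⊆ M.E) : M.Dep C ↔ M.Dep (C ∩ X) ∨ M.Dep (C ∩ Y) := by
  constructor
  · intro hd
    by_contra hn
    push Not at hn
    have h1 := (not_dep_iff (inter_subset_left.trans hC)).1 hn.1
    have h2 := (not_dep_iff (inter_subset_left.trans hC)).1 hn.2
    have h3 := h.indep_union hfin h1 inter_subset_right h2 inter_subset_right
    rw [← inter_union_distrib_left, h.1, inter_eq_self_of_subset_left hC] at h3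
    exact hd.not_indep h3
  · rintro (h | h)
    · exact h.superset inter_subset_left hC
    · exact h.superset inter_subset_left hC

lemma IsKSep.symm {M : Matroid α} {k : ℕ} {X Y : Set α} (h : IsKSep M k X Y) : IsKSep M k Y X := by
  obtain ⟨h1, h2, h3, h4, h5⟩ := h
  exact ⟨union_comm X Y ▸ h1, h2.symm, h4, h3, add_comm (eRk M X) (eRk M Y) ▸ h5⟩

/-- The disjoint union of two maps giving the ends of edges, one used on `X` and the other used
off `X`. -/
noncomputable def glue {V W : Type u} (X : Set α) (a : α → V) (a' : α → W) (e : α) : V ⊕ W :=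
  if e ∈ X then Sum.inl (a e) else Sum.inr (a' e)

lemma ev_glue {W : Type u} {X : Set α} {a b : α → V} {a' b' : α → W} {A : Finset α} :
    Ev (glue X a a') (glue X b b') A ↔
      Ev a b (A.filter (· ∈ X)) ∧ Ev a' b' (A.filter (· ∉ X)) := by
  have h1 : ∀ v, hdeg (glue X a a') (glue X b b') A (Sum.inl v) =
      hdeg a b (A.filter (· ∈ X)) v := by
    intro v
    unfold hdeg
    rw [Finset.sum_filter]
    refine Finset.sum_congr rfl fun e _ => ?_
    by_cases he : e ∈ X <;> simp [glue, ind, he]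
  have h2 : ∀ v, hdeg (glue X a a') (glue X b b') A (Sum.inr v) =
      hdeg a' b' (A.filter (· ∉ X)) v := by
    intro v
    unfold hdeg
    rw [Finset.sum_filter]
    refine Finset.sum_congr rfl fun e _ => ?_
    by_cases he : e ∈ X <;> simp [glue, ind, he]
  refine ⟨fun h => ⟨fun v => h1 v ▸ h _, fun v => h2 v ▸ h _⟩, fun h v => ?_⟩
  rcases v with v | v
  · rw [h1]; exact h.1 v
  · rw [h2]; exact h.2 v

lemma ev_star {A : Finset α} : Ev (fun _ => none) (fun e => some e) A ↔ A = ∅ := by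
  refine ⟨fun h => ?_, by rintro rfl; exact ev_empty⟩
  by_contra hA
  obtain ⟨e, he⟩ := Finset.nonempty_iff_ne_empty.2 hA
  have h1 := h (some e)
  have : hdeg (fun _ => none) (fun e => some e) A (some e) = 1 := by
    simp [hdeg, ind, he]
  rw [this] at h1
  exact absurd h1 (by decide)

lemma finCirc_of_finite {M : Matroid α} (hfin : M.E.Finite) : FinCirc M :=
  fun _ hC => hfin.subset (IsCircuit.subset_ground hC)

lemma Rep.dep {Q : (Finset α → Prop) → Finset α → Prop} {M : Matroid α} {X : Set α} (hX : X ⊆ M.E)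
    (h : Rep Q (M ↾ X)) : ∃ (V : Type u) (a b : α → V), ∀ C : Finset α, (↑C : Set α) ⊆ X →
      (M.Dep ↑C ↔ Q (Ev a b) C) := by
  obtain ⟨-, V, a, b, h⟩ := h
  refine ⟨V, a, b, fun C hC => ?_⟩
  rw [← h C hC, restrict_dep_iff, Dep]
  simp [hC, hC.trans hX]

lemma filter_not_of_subset {X Y : Set α} (hd : Disjoint X Y) {C : Finset α}
    (hC : (↑C : Set α) ⊆ X ∪ Y) : C.filter (· ∉ X) = C.filter (· ∈ Y) := by
  refine Finset.filter_congr fun e he => ?_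
  have := hC he
  have h2 : e ∈ X → e ∉ Y := fun h => Set.disjoint_left.1 hd h
  simp only [Set.mem_union] at this
  tauto

/-- A direct sum of two graphic matroids is graphic. -/
lemma rep_gDep_of_sep {M : Matroid α} (hfin : M.E.Finite) {X Y : Set α} (h : IsKSep M 1 X Y)
    (hX : Rep GDep (M ↾ X)) (hY : Rep GDep (M ↾ Y)) : Rep GDep M := by
  obtain ⟨V, a, b, hX⟩ := hX.dep (h.1 ▸ subset_union_left)
  obtain ⟨W, a', b', hY⟩ := hY.dep (h.1 ▸ subset_union_right)
  refine ⟨finCirc_of_finite hfin, V ⊕ W, glue X a a', glue X b b', fun C hC => ?_⟩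
  have hC' : C.filter (· ∉ X) = C.filter (· ∈ Y) :=
    filter_not_of_subset h.2.1 (h.1.symm ▸ hC)
  have e1 : (↑C ∩ X : Set α) = ↑(C.filter (· ∈ X)) := by ext; simp
  have e2 : (↑C ∩ Y : Set α) = ↑(C.filter (· ∉ X)) := by rw [hC']; ext; simp
  rw [h.dep_iff hfin hC, e1, e2, hX _ (by intro x; simp), hY _ (by rw [hC']; intro x; simp)]
  constructor
  · rintro (⟨A, hA, hne, hev⟩ | ⟨A, hA, hne, hev⟩)
    · refine ⟨A, hA.trans (Finset.filter_subset _ _), hne, ev_glue.2 ⟨?_, ?_⟩⟩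
      · rwa [Finset.filter_true_of_mem fun x hx => (Finset.mem_filter.1 (hA hx)).2]
      · rw [Finset.filter_false_of_mem fun x hx => not_not.2 (Finset.mem_filter.1 (hA hx)).2]
        exact ev_empty
    · refine ⟨A, hA.trans (Finset.filter_subset _ _), hne, ev_glue.2 ⟨?_, ?_⟩⟩
      · rw [Finset.filter_false_of_mem fun x hx => (Finset.mem_filter.1 (hA hx)).2]
        exact ev_empty
      · rwa [Finset.filter_true_of_mem fun x hx => (Finset.mem_filter.1 (hA hx)).2]
  · rintro ⟨A, hA, ⟨x, hx⟩, hev⟩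
    rw [ev_glue] at hev
    by_cases hxX : x ∈ X
    · exact Or.inl ⟨_, Finset.filter_subset_filter _ hA, ⟨x, by simp [hx, hxX]⟩, hev.1⟩
    · exact Or.inr ⟨_, Finset.filter_subset_filter _ hA, ⟨x, by simp [hx, hxX]⟩, hev.2⟩

/-- A direct sum of a bicircular lift matroid and a free matroid is bicircular lift. -/
lemma rep_lDep_of_sep {M : Matroid α} (hfin : M.E.Finite) {X Y : Set α} (h : IsKSep M 1 X Y)
    (hX : Rep LDep (M ↾ X)) (hY : M.Indep Y) : Rep LDep M := by
  obtain ⟨V, a, b, hX⟩ := hX.dep (h.1 ▸ subset_union_left)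
  refine ⟨finCirc_of_finite hfin, V ⊕ Option α, glue X a (fun _ => none),
    glue X b (fun e => some e), fun C hC => ?_⟩
  have e1 : (↑C ∩ X : Set α) = ↑(C.filter (· ∈ X)) := by ext; simp
  have e2 : ¬ M.Dep (↑C ∩ Y) := fun hd => hd.not_indep (hY.subset inter_subset_right)
  rw [h.dep_iff hfin hC, or_iff_left e2, e1, hX _ (by intro x; simp)]
  have key : ∀ A, Ev (glue X a (fun _ => none)) (glue X b (fun e => some e)) A ↔
      A.filter (· ∈ X) = A ∧ Ev a b A := by
    intro A
    rw [ev_glue, ev_star, Finset.filter_eq_empty_iff, Finset.filter_eq_self]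
    simp only [not_not]
    constructor
    · rintro ⟨h1, h2⟩
      rw [Finset.filter_true_of_mem h2] at h1
      exact ⟨h2, h1⟩
    · rintro ⟨h2, h1⟩
      rw [Finset.filter_true_of_mem h2]
      exact ⟨h1, h2⟩
  constructor
  · rintro ⟨A, hA, B, hB, hA0, hB0, hAB, hA1, hB1⟩
    refine ⟨A, hA.trans (Finset.filter_subset _ _), B, hB.trans (Finset.filter_subset _ _),
      hA0, hB0, hAB, (key A).2 ⟨?_, hA1⟩, (key B).2 ⟨?_, hB1⟩⟩
    · exact Finset.filter_true_of_mem fun x hx => (Finset.mem_filter.1 (hA hx)).2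
    · exact Finset.filter_true_of_mem fun x hx => (Finset.mem_filter.1 (hB hx)).2
  · rintro ⟨A, hA, B, hB, hA0, hB0, hAB, hA1, hB1⟩
    rw [key] at hA1 hB1
    exact ⟨A, hA1.1 ▸ Finset.filter_subset_filter _ hA, B,
      hB1.1 ▸ Finset.filter_subset_filter _ hB, hA0, hB0, hAB, hA1.2, hB1.2⟩

end DirectSum

/-! ### Graphic bicircular lift matroids -/

section Classes

open scoped Classical

variable {V α : Type u}

/-- The graph obtained by subdividing the edge `f`, the new edge being called `e`: its even sets
contain both or none of `e` and `f`. -/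
lemma ev_subdivide {a b : α → V} {e f : α} (hef : e ≠ f) (A : Finset α) :
    Ev (fun x => if x = e then none else some (a x))
      (fun x => if x = e then some (b f) else if x = f then none else some (b x)) A ↔
      (e ∈ A ↔ f ∈ A) ∧ Ev a b (A.erase e) := by
  set a' : α → Option V := fun x => if x = e then none else some (a x) with ha'
  set b' : α → Option V := fun x => if x = e then some (b f) else if x = f then none else some (b x)
    with hb'
  have hnone : hdeg a' b' A none = (if e ∈ A then 1 else 0) + (if f ∈ A then 1 else 0) := by
    have : ∀ x, ind (a' x) none + ind (b' x) none =
        (if x = e then 1 else 0) + (if x = f then 1 else 0) := by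
      intro x
      by_cases h1 : x = e
      · have : x ≠ f := fun h => hef (h1.symm.trans h)
        simp [ha', hb', ind, h1, hef]
      · by_cases h2 : x = f <;> simp [ha', hb', ind, h1, h2, hef.symm]
    simp only [hdeg, this, Finset.sum_add_distrib, Finset.sum_ite_eq']
  have hother : ∀ B : Finset α, e ∉ B → f ∉ B → ∀ v, hdeg a' b' B (some v) = hdeg a b B v := by
    intro B he hf v
    refine Finset.sum_congr rfl fun x hx => ?_
    have h1 : x ≠ e := fun h => he (h ▸ hx)
    have h2 : x ≠ f := fun h => hf (h ▸ hx)
    simp [ha', hb', ind, h1, h2]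
  have hsome : (e ∈ A ↔ f ∈ A) → ∀ v, hdeg a' b' A (some v) = hdeg a b (A.erase e) v := by
    intro h v
    by_cases he : e ∈ A
    · have hf : f ∈ A.erase e := Finset.mem_erase.2 ⟨hef.symm, h.1 he⟩
      have h1 := hdeg_erase (a := a') (b := b') he (some v)
      have h2 := hdeg_erase (a := a') (b := b') hf (some v)
      have h3 := hdeg_erase (a := a) (b := b) hf v
      have h4 := hother ((A.erase e).erase f) (by simp) (by simp) v
      have h5 : ind (a' e) (some v) + ind (b' e) (some v) = ind (b f) v := by
        simp [ha', hb', ind]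
      have h6 : ind (a' f) (some v) + ind (b' f) (some v) = ind (a f) v := by
        simp [ha', hb', ind, hef.symm]
      omega
    · rw [Finset.erase_eq_of_notMem he]
      exact hother A he (fun hf => he (h.2 hf)) v
  constructor
  · intro h
    have h1 : e ∈ A ↔ f ∈ A := by
      have := h none
      rw [hnone] at this
      by_cases he : e ∈ A <;> by_cases hf : f ∈ A <;> simp [he, hf] at this ⊢
    exact ⟨h1, fun v => hsome h1 v ▸ h (some v)⟩
  · rintro ⟨h1, h2⟩ v
    cases v with
    | none =>
      rw [hnone]
      by_cases he : e ∈ A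
      · simp [he, h1.1 he]
      · have hf : f ∉ A := fun hf => he (h1.2 hf)
        simp [he, hf]
    | some v => rw [hsome h1]; exact h2 v

/-- Given a partition into classes of part of a finite set `E` (the remaining elements being sent to
`none`), there is a graph whose even subsets of `E` are the unions of an even number of classes: the classes are parallel paths joining two vertices. -/
lemma exists_class_graph {ι : Type*} (c : α → Option ι) : ∀ (n : ℕ) (E : Finset α), E.card = n →
    ∃ (V : Type u) (a b : α → V), ∀ A ⊆ E, Ev a b A ↔ (∀ e ∈ A, c e ≠ none) ∧
      (∀ e ∈ A, ∀ f ∈ E, c f = c e → f ∈ A) ∧ Even (A.image c).card := by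
  intro n
  induction n with
  | zero =>
    intro E hE
    rw [Finset.card_eq_zero] at hE
    subst hE
    refine ⟨PUnit, fun _ => .unit, fun _ => .unit, fun A hA => ?_⟩
    rw [Finset.subset_empty.1 hA]
    simp [ev_empty]
  | succ n ih =>
    intro E hE
    by_cases hinj : ∃ e ∈ E, ∃ f ∈ E, e ≠ f ∧ c e = c f ∧ c e ≠ none
    · obtain ⟨e, he, f, hf, hef, hc, hcn⟩ := hinj
      obtain ⟨V, a, b, hab⟩ := ih (E.erase e) (by rw [Finset.card_erase_of_mem he, hE]; rfl)
      refine ⟨_, _, _, fun A hA => (ev_subdivide (a := a) (b := b) hef A).trans ?_⟩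
      rw [hab _ (Finset.erase_subset_erase _ hA)]
      have himg : (e ∈ A ↔ f ∈ A) → (A.erase e).image c = A.image c := by
        intro h
        refine Finset.Subset.antisymm (Finset.image_subset_image (Finset.erase_subset _ _)) ?_
        intro i hi
        obtain ⟨x, hx, rfl⟩ := Finset.mem_image.1 hi
        by_cases hxe : x = e
        · subst hxe
          exact Finset.mem_image.2 ⟨f, by simp [hef.symm, h.1 hx], hc.symm⟩
        · exact Finset.mem_image.2 ⟨x, by simp [hxe, hx], rfl⟩
      constructor
      · rintro ⟨h, h1, h2, h3⟩
        rw [himg h] at h3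
        refine ⟨fun x hx => ?_, fun x hx y hy hxy => ?_, h3⟩
        · by_cases hxe : x = e
          · exact hxe ▸ hcn
          · exact h1 x (by simp [hxe, hx])
        · have hx' : ∃ x' ∈ A.erase e, c x' = c x := by
            by_cases hxe : x = e
            · subst hxe
              exact ⟨f, by simp [hef.symm, h.1 hx], hc.symm⟩
            · exact ⟨x, by simp [hxe, hx], rfl⟩
          obtain ⟨x', hx', hxx⟩ := hx'
          by_cases hye : y = e
          · subst hye
            refine h.2 (Finset.mem_of_mem_erase (h2 x' hx' f (by simp [hef.symm, hf]) ?_))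
            rw [← hc, hxy, hxx]
          · exact Finset.mem_of_mem_erase (h2 x' hx' y (by simp [hye, hy]) (hxy.trans hxx.symm))
      · rintro ⟨h1, h2, h3⟩
        have h : e ∈ A ↔ f ∈ A := ⟨fun h => h2 e h f hf hc.symm, fun h => h2 f h e he hc⟩
        refine ⟨h, fun x hx => h1 x (Finset.mem_of_mem_erase hx), fun x hx y hy hxy => ?_, ?_⟩
        · exact Finset.mem_erase.2 ⟨Finset.ne_of_mem_erase hy,
            h2 x (Finset.mem_of_mem_erase hx) y (Finset.mem_of_mem_erase hy) hxy⟩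
        · rwa [himg h]
    · push Not at hinj
      -- All classes are singletons: they become parallel edges, the remaining elements pendant edges.
      set a : α → Option (Option α) := fun e => if c e = none then some (some e) else some none
        with ha
      set b : α → Option (Option α) := fun _ => none with hb
      have h1 : ∀ A e, e ∈ A → c e = none → hdeg a b A (some (some e)) = 1 := by
        intro A e he hce
        unfold hdeg
        rw [Finset.sum_eq_single_of_mem e he]
        · simp [ha, hb, ind, hce]
        · intro x _ hx
          by_cases hcx : c x = none <;> simp [ha, hb, ind, hcx, hx]
      have h2 : ∀ A : Finset α, (∀ e ∈ A, c e ≠ none) → ∀ v, hdeg a b A v =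
          if v = none ∨ v = some none then A.card else 0 := by
        intro A hA v
        unfold hdeg
        have : ∀ x ∈ A, ind (a x) v + ind (b x) v = if v = none ∨ v = some none then 1 else 0 := by
          intro x hx
          rcases v with _ | _ | v <;> simp [ha, hb, ind, hA x hx]
        rw [Finset.sum_congr rfl this]
        by_cases hv : v = none ∨ v = some none <;> simp [hv]
      have h3 : ∀ A ⊆ E, (∀ e ∈ A, c e ≠ none) → (A.image c).card = A.card := by
        intro A hA hn
        refine Finset.card_image_of_injOn fun x hx y hy hxy => ?_
        by_contra hne
        exact hn x hx (hinj x (hA hx) y (hA hy) hne hxy)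
      refine ⟨_, a, b, fun A hA => ?_⟩
      constructor
      · intro h
        have hn : ∀ e ∈ A, c e ≠ none := by
          intro e he hce
          have := h (some (some e))
          rw [h1 A e he hce] at this
          exact absurd this (by decide)
        refine ⟨hn, fun e he f hf hfe => ?_, ?_⟩
        · by_cases hne : f = e
          · exact hne ▸ he
          · exact absurd (hfe ▸ hinj f hf e (hA he) hne hfe) (hn e he)
        · rw [h3 A hA hn]
          have := h none
          rw [h2 A hn] at this
          simpa using this
      · rintro ⟨hn, -, he⟩ v
        rw [h2 A hn]
        rw [h3 A hA hn] at he
        split_ifs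
        · exact he
        · simp

lemma exists_class_graph_gDep {ι : Type*} (c : α → Option ι) (E : Finset α) :
    ∃ (V : Type u) (a b : α → V), ∀ C ⊆ E, GDep (Ev a b) C ↔ ∃ e ∈ C, ∃ f ∈ C, c e ≠ none ∧
      c f ≠ none ∧ c e ≠ c f ∧ ∀ g ∈ E, c g = c e ∨ c g = c f → g ∈ C := by
  obtain ⟨V, a, b, hab⟩ := exists_class_graph c _ E rfl
  refine ⟨V, a, b, fun C hC => ?_⟩
  constructor
  · rintro ⟨A, hA, hne, hev⟩
    rw [hab A (hA.trans hC)] at hev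
    obtain ⟨h1, h2, h3⟩ := hev
    have hpos : 0 < (A.image c).card := Finset.card_pos.2 (hne.image c)
    have : 1 < (A.image c).card := by
      obtain ⟨k, hk⟩ := h3
      omega
    obtain ⟨i, hi, j, hj, hij⟩ := Finset.one_lt_card.1 this
    obtain ⟨e, he, rfl⟩ := Finset.mem_image.1 hi
    obtain ⟨f, hf, rfl⟩ := Finset.mem_image.1 hj
    refine ⟨e, hA he, f, hA hf, h1 e he, h1 f hf, hij, ?_⟩
    rintro g hg (h | h)
    · exact hA (h2 e he g hg h)
    · exact hA (h2 f hf g hg h)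
  · rintro ⟨e, he, f, hf, hce, hcf, hne, h⟩
    have hmem : ∀ g, g ∈ E.filter (fun g => c g = c e ∨ c g = c f) ↔
        g ∈ E ∧ (c g = c e ∨ c g = c f) := fun g => Finset.mem_filter
    refine ⟨E.filter (fun g => c g = c e ∨ c g = c f), fun g hg => ?_, ⟨e, ?_⟩, ?_⟩
    · exact h g ((hmem g).1 hg).1 ((hmem g).1 hg).2
    · exact (hmem e).2 ⟨hC he, Or.inl rfl⟩
    · rw [hab _ (Finset.filter_subset _ _)]
      refine ⟨fun g hg => ?_, fun g hg g' hg' hgg => ?_, ?_⟩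
      · rcases ((hmem g).1 hg).2 with h | h <;> rw [h] <;> assumption
      · exact (hmem g').2 ⟨hg', by rw [hgg]; exact ((hmem g).1 hg).2⟩
      · have : (E.filter (fun g => c g = c e ∨ c g = c f)).image c = {c e, c f} := by
          ext i
          simp only [Finset.mem_image, hmem, Finset.mem_insert, Finset.mem_singleton]
          constructor
          · rintro ⟨g, ⟨-, h⟩, rfl⟩
            exact h
          · rintro (rfl | rfl)
            · exact ⟨e, ⟨hC he, Or.inl rfl⟩, rfl⟩
            · exact ⟨f, ⟨hC hf, Or.inr rfl⟩, rfl⟩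
        rw [this, Finset.card_pair hne]
        exact even_two

/-- If the cycles inside `E` are pairwise disjoint, `L(G)` is graphic on `E`. -/
lemma exists_graph_of_disjoint {a b : α → V} {E : Finset α}
    (h : ∀ A ⊆ E, ∀ B ⊆ E, MinEv a b A → MinEv a b B → A ≠ B → Disjoint A B) :
    ∃ (W : Type u) (a' b' : α → W), ∀ C ⊆ E, LDep (Ev a b) C ↔ GDep (Ev a' b') C := by
  let c : α → Option (Finset α) := fun e =>
    if h : ∃ A ⊆ E, MinEv a b A ∧ e ∈ A then some h.choose else none
  have hc : ∀ e A, c e = some A ↔ A ⊆ E ∧ MinEv a b A ∧ e ∈ A := by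
    intro e A
    constructor
    · intro hA
      by_cases he : ∃ A ⊆ E, MinEv a b A ∧ e ∈ A
      · simp only [c, dif_pos he, Option.some.injEq] at hA
        exact hA ▸ he.choose_spec
      · simp [c, dif_neg he] at hA
    · rintro ⟨hA, hm, heA⟩
      have he : ∃ A ⊆ E, MinEv a b A ∧ e ∈ A := ⟨A, hA, hm, heA⟩
      simp only [c, dif_pos he, Option.some.injEq]
      by_contra hne
      have hs := he.choose_spec
      exact Finset.disjoint_left.1 (h _ hs.1 _ hA hs.2.1 hm hne) hs.2.2 heA
  obtain ⟨W, a', b', hW⟩ := exists_class_graph_gDep c E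
  refine ⟨W, a', b', fun C hC => ?_⟩
  rw [hW C hC]
  constructor
  · intro hL
    obtain ⟨A, hA, B, hB, hne, hAm, hBm⟩ := exists_two_minEv hL
    obtain ⟨e, he⟩ := hAm.1
    obtain ⟨f, hf⟩ := hBm.1
    have h1 := (hc e A).2 ⟨hA.trans hC, hAm, he⟩
    have h2 := (hc f B).2 ⟨hB.trans hC, hBm, hf⟩
    refine ⟨e, hA he, f, hB hf, by simp [h1], by simp [h2], by simp [h1, h2, hne], ?_⟩
    rintro g - (hg | hg)
    · exact hA ((hc g A).1 (hg.trans h1)).2.2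
    · exact hB ((hc g B).1 (hg.trans h2)).2.2
  · rintro ⟨e, he, f, hf, hce, hcf, hne, hg⟩
    obtain ⟨A, hA⟩ := Option.ne_none_iff_exists'.1 hce
    obtain ⟨B, hB⟩ := Option.ne_none_iff_exists'.1 hcf
    have h1 := (hc e A).1 hA
    have h2 := (hc f B).1 hB
    refine ⟨A, fun g hgA => hg g (h1.1 hgA) (Or.inl ?_), B, fun g hgB => hg g (h2.1 hgB) (Or.inr ?_),
      h1.2.1.1, h2.2.1.1, ?_, h1.2.1.2.1, h2.2.1.2.1⟩
    · rw [hA, hc]; exact ⟨h1.1, h1.2.1, hgA⟩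
    · rw [hB, hc]; exact ⟨h2.1, h2.2.1, hgB⟩
    · rintro rfl
      exact hne (hA.trans hB.symm)

/-- If `A ∪ B` is the only circuit of `L(G)` inside `E`, then `L(G)` is graphic on `E`. -/
lemma exists_graph_of_unique {a b : α → V} {E A B : Finset α} (hA : A.Nonempty)
    (hB : (B \ A).Nonempty) (h : ∀ C ⊆ E, LDep (Ev a b) C ↔ A ∪ B ⊆ C) (hE : A ∪ B ⊆ E) :
    ∃ (W : Type u) (a' b' : α → W), ∀ C ⊆ E, LDep (Ev a b) C ↔ GDep (Ev a' b') C := by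
  let c : α → Option Bool := fun e => if e ∈ A then some true else if e ∈ B then some false else none
  obtain ⟨W, a', b', hW⟩ := exists_class_graph_gDep c E
  have c1 : ∀ e, c e = some true ↔ e ∈ A := by
    intro e; by_cases h1 : e ∈ A <;> by_cases h2 : e ∈ B <;> simp [c, h1, h2]
  have c2 : ∀ e, c e = some false ↔ e ∈ B ∧ e ∉ A := by
    intro e; by_cases h1 : e ∈ A <;> by_cases h2 : e ∈ B <;> simp [c, h1, h2]
  have c3 : ∀ e, c e ≠ none ↔ e ∈ A ∪ B := by
    intro e; by_cases h1 : e ∈ A <;> by_cases h2 : e ∈ B <;> simp [c, h1, h2]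
  refine ⟨W, a', b', fun C hC => ?_⟩
  rw [hW C hC, h C hC]
  constructor
  · intro hsub
    obtain ⟨e, he⟩ := hA
    obtain ⟨f, hf⟩ := hB
    rw [Finset.mem_sdiff] at hf
    have he' := (c1 e).2 he
    have hf' := (c2 f).2 hf
    refine ⟨e, hsub (Finset.mem_union_left _ he), f, hsub (Finset.mem_union_right _ hf.1),
      by simp [he'], by simp [hf'], by simp [he', hf'], fun g _ hg => hsub ((c3 g).1 ?_)⟩
    rcases hg with hg | hg <;> simp [hg, he', hf']
  · rintro ⟨e, -, f, -, he, hf, hne, hg⟩ g hgT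
    refine hg g (hE hgT) ?_
    have := (c3 g).2 hgT
    revert he hf hne this
    rcases c e with _ | _ | _ <;> rcases c f with _ | _ | _ <;> rcases c g with _ | _ | _ <;> simp

end Classes

/-! ### Finding the four elements of `U_{2,4}` -/

section Core

open scoped Classical

variable {V α : Type u}

lemma MinEv.not_subset {a b : α → V} {A B : Finset α} (hA : MinEv a b A) (hB : MinEv a b B)
    (hne : A ≠ B) : ¬ A ⊆ B := fun h => hne (hB.2.2 A h hA.1 hA.2.1)

/-- If `A` and `B` are intersecting cycles with `A ∪ B` of minimum size, then `A ∪ B` is the edge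
set of a theta subgraph, with cycles `A`, `B` and `A ∆ B`. -/
lemma theta_even_s6 {a b : α → V} {E A B : Finset α} (hAE : A ⊆ E) (hBE : B ⊆ E) (hA : MinEv a b A)
    (hB : MinEv a b B) (hne : A ≠ B) (hAB : (A ∩ B).Nonempty)
    (hmin : ∀ A' ⊆ E, ∀ B' ⊆ E, MinEv a b A' → MinEv a b B' → A' ≠ B' → (A' ∩ B').Nonempty →
      (A ∪ B).card ≤ (A' ∪ B').card)
    {F : Finset α} (hF : F.Nonempty) (hev : Ev a b F) (hFT : F ⊆ A ∪ B) :
    F = A ∨ F = B ∨ F = symmDiff A B := by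
  have hTE : A ∪ B ⊆ E := Finset.union_subset hAE hBE
  obtain ⟨r₁, h1A, h1B⟩ := Finset.not_subset.1 (hA.not_subset hB hne)
  obtain ⟨r₂, h2B, h2A⟩ := Finset.not_subset.1 (hB.not_subset hA hne.symm)
  obtain ⟨r₃, h3⟩ := hAB
  rw [Finset.mem_inter] at h3
  -- By minimality, any two distinct intersecting cycles in `A ∪ B` have union `A ∪ B`.
  have hcov : ∀ D F : Finset α, D ⊆ A ∪ B → F ⊆ A ∪ B → MinEv a b D → MinEv a b F → F ≠ D →
      (F ∩ D).Nonempty → F ∪ D = A ∪ B := fun D F hD hF hDm hFm hne hi =>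
    Finset.eq_of_subset_of_card_le (Finset.union_subset hF hD)
      (hmin F (hF.trans hTE) D (hD.trans hTE) hFm hDm hne hi)
  have hcyc : ∀ F : Finset α, MinEv a b F → F ⊆ A ∪ B → F = A ∨ F = B ∨ F = symmDiff A B := by
    intro F hF hFT
    by_cases hFA : F = A
    · exact Or.inl hFA
    by_cases hFB : F = B
    · exact Or.inr (Or.inl hFB)
    refine Or.inr (Or.inr ?_)
    have hiA : (F ∩ A).Nonempty := by
      obtain ⟨x, hx, hxB⟩ := Finset.not_subset.1 (hF.not_subset hB hFB)
      have := Finset.mem_union.1 (hFT hx)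
      exact ⟨x, Finset.mem_inter.2 ⟨hx, this.resolve_right hxB⟩⟩
    have hiB : (F ∩ B).Nonempty := by
      obtain ⟨x, hx, hxA⟩ := Finset.not_subset.1 (hF.not_subset hA hFA)
      have := Finset.mem_union.1 (hFT hx)
      exact ⟨x, Finset.mem_inter.2 ⟨hx, this.resolve_left hxA⟩⟩
    have e1 := hcov A F Finset.subset_union_left hFT hA hF hFA hiA
    have e2 := hcov B F Finset.subset_union_right hFT hB hF hFB hiB
    have hsub : symmDiff F (symmDiff A B) ⊆ A ∩ B := by
      intro x hx
      have m1 := Finset.ext_iff.1 e1 x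
      have m2 := Finset.ext_iff.1 e2 x
      simp only [Finset.mem_union, Finset.mem_symmDiff, Finset.mem_inter] at m1 m2 hx ⊢
      tauto
    have hev' := ev_symmDiff hF.2.1 (ev_symmDiff hA.2.1 hB.2.1)
    rcases Finset.eq_empty_or_nonempty (symmDiff F (symmDiff A B)) with h0 | h0
    · exact symmDiff_eq_bot.1 h0
    · have := hA.2.2 _ (hsub.trans Finset.inter_subset_left) h0 hev'
      rw [this] at hsub
      exact absurd (Finset.mem_inter.1 (hsub h1A)).2 h1B
  obtain ⟨A', hA'F, hA'⟩ := exists_minEv ⟨F, subset_rfl, hF, hev⟩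
  have hA'c := hcyc A' hA' (hA'F.trans hFT)
  have hFA' : F = A' := by
    by_contra hne'
    have hd : (symmDiff F A').Nonempty := by
      rw [Finset.nonempty_iff_ne_empty]
      exact fun h => hne' (symmDiff_eq_bot.1 h)
    obtain ⟨B', hB'F, hB'⟩ := exists_minEv ⟨_, subset_rfl, hd, ev_symmDiff hev hA'.2.1⟩
    have hB'd : ∀ x, x ∈ B' → x ∈ F ∧ x ∉ A' := by
      intro x hx
      have := Finset.mem_symmDiff.1 (hB'F hx)
      have h2 := @hA'F x
      tauto
    have hB'c := hcyc B' hB' (fun x hx => hFT (hB'd x hx).1)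
    have k1 := hB'd r₁
    have k2 := hB'd r₂
    have k3 := hB'd r₃
    rcases hA'c with rfl | rfl | rfl <;> rcases hB'c with rfl | rfl | rfl <;>
      simp [Finset.mem_symmDiff, h1A, h1B, h2A, h2B, h3.1, h3.2] at k1 k2 k3
  rw [hFA']
  exact hA'c

/-- If `L(G)` is not graphic on `E`, then some `X₀ ⊆ E` contains a four-element set `R` such that
`X₀` remains dependent in `L(G)` after removing one element of `R`, but not after removing two.
So contracting `X₀ \ R` in the restriction of `L(G)` to `X₀` gives `U_{2,4}` on `R`. -/
lemma exists_core {a b : α → V} {E : Finset α}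
    (hn : ¬ ∃ (W : Type u) (a' b' : α → W), ∀ C ⊆ E, LDep (Ev a b) C ↔ GDep (Ev a' b') C) :
    ∃ X₀ ⊆ E, ∃ R ⊆ X₀, R.card = 4 ∧ (∀ r ∈ R, LDep (Ev a b) (X₀.erase r)) ∧
      ∀ r ∈ R, ∀ s ∈ R, r ≠ s → ¬ LDep (Ev a b) ((X₀.erase r).erase s) := by
  have h1 : ∃ p : Finset α × Finset α, p.1 ⊆ E ∧ p.2 ⊆ E ∧ MinEv a b p.1 ∧ MinEv a b p.2 ∧
      p.1 ≠ p.2 ∧ (p.1 ∩ p.2).Nonempty := by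
    by_contra hcon
    refine hn (exists_graph_of_disjoint fun A hA B hB hAm hBm hne => ?_)
    by_contra hd
    rw [Finset.not_disjoint_iff_nonempty_inter] at hd
    exact hcon ⟨(A, B), hA, hB, hAm, hBm, hne, hd⟩
  obtain ⟨⟨A, B⟩, ⟨hAE, hBE, hA, hB, hne, hAB⟩, hmin⟩ :=
    exists_minimalFor_of_wellFoundedLT _ (fun p : Finset α × Finset α => (p.1 ∪ p.2).card) h1
  dsimp only at hAE hBE hA hB hne hAB hmin
  have hTE : A ∪ B ⊆ E := Finset.union_subset hAE hBE
  have hT : ∀ F : Finset α, F.Nonempty → Ev a b F → F ⊆ A ∪ B →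
      F = A ∨ F = B ∨ F = symmDiff A B := fun F h0 h1 h2 =>
    theta_even_s6 hAE hBE hA hB hne hAB (fun A' hA' B' hB' h1 h2 h3 h4 => by
      have := @hmin (A', B') ⟨hA', hB', h1, h2, h3, h4⟩
      dsimp only at this
      omega) h0 h1 h2
  obtain ⟨r₁, h1A, h1B⟩ := Finset.not_subset.1 (hA.not_subset hB hne)
  obtain ⟨r₂, h2B, h2A⟩ := Finset.not_subset.1 (hB.not_subset hA hne.symm)
  obtain ⟨r₃, h3⟩ := hAB
  obtain ⟨h3A, h3B⟩ := Finset.mem_inter.1 h3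
  have h2 : ∃ D : Finset α, D ⊆ E ∧ Ev a b D ∧ ¬ D ⊆ A ∪ B := by
    by_contra hcon
    push Not at hcon
    refine hn (exists_graph_of_unique hA.1 ⟨r₂, by simp [h2A, h2B]⟩ (fun C hC => ⟨?_, ?_⟩) hTE)
    · rintro ⟨F₁, hF₁, F₂, hF₂, h10, h20, hF, h11, h21⟩
      have c1 := hT F₁ h10 h11 (hcon F₁ (hF₁.trans hC) h11)
      have c2 := hT F₂ h20 h21 (hcon F₂ (hF₂.trans hC) h21)
      intro x hx
      have k1 := @hF₁ x
      have k2 := @hF₂ x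
      rcases c1 with rfl | rfl | rfl <;> rcases c2 with rfl | rfl | rfl <;>
        simp only [Finset.mem_symmDiff, Finset.mem_union] at k1 k2 hx <;> tauto
    · intro h
      exact ⟨A, Finset.subset_union_left.trans h, B, Finset.subset_union_right.trans h, hA.1, hB.1,
        hne, hA.2.1, hB.2.1⟩
  obtain ⟨D, ⟨hDE, hDev, hDT⟩, hDmin⟩ :=
    exists_minimalFor_of_wellFoundedLT _ (fun D : Finset α => (D \ (A ∪ B)).card) h2
  dsimp only at hDmin
  obtain ⟨r₄, h4D, h4T⟩ := Finset.not_subset.1 hDT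
  have h4 : r₄ ∉ A ∧ r₄ ∉ B := by simpa using h4T
  -- An even subset of `A ∪ B ∪ D` not inside `A ∪ B` agrees with `D` outside `A ∪ B`.
  have hout : ∀ F ⊆ A ∪ B ∪ D, Ev a b F → ¬ F ⊆ A ∪ B → F \ (A ∪ B) = D \ (A ∪ B) := by
    intro F hF hev hFT
    have hFE : F ⊆ E := hF.trans (Finset.union_subset hTE hDE)
    have hsub : F \ (A ∪ B) ⊆ D \ (A ∪ B) := by
      intro x hx
      rw [Finset.mem_sdiff] at hx ⊢
      exact ⟨(Finset.mem_union.1 (hF hx.1)).resolve_left hx.2, hx.2⟩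
    refine Finset.eq_of_subset_of_card_le hsub ?_
    have h1 := Finset.card_le_card hsub
    have := @hDmin F ⟨hFE, hev, hFT⟩
    omega
  have hin : ∀ F ⊆ A ∪ B ∪ D, Ev a b F → r₄ ∉ F → F ⊆ A ∪ B := by
    intro F hF hev h4F
    by_contra hFT
    have : r₄ ∈ F \ (A ∪ B) := by
      rw [hout F hF hev hFT]
      exact Finset.mem_sdiff.2 ⟨h4D, h4T⟩
    exact h4F (Finset.mem_sdiff.1 this).1
  have n12 : r₁ ≠ r₂ := fun h => h2A (h ▸ h1A)
  have n13 : r₁ ≠ r₃ := fun h => h1B (h ▸ h3B)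
  have n23 : r₂ ≠ r₃ := fun h => h2A (h ▸ h3A)
  have n14 : r₁ ≠ r₄ := fun h => h4.1 (h ▸ h1A)
  have n24 : r₂ ≠ r₄ := fun h => h4.2 (h ▸ h2B)
  have n34 : r₃ ≠ r₄ := fun h => h4.1 (h ▸ h3A)
  have hABev := ev_symmDiff hA.2.1 hB.2.1
  refine ⟨A ∪ B ∪ D, Finset.union_subset hTE hDE, {r₁, r₂, r₃, r₄}, ?_, ?_, ?_, ?_⟩
  · intro x hx
    simp only [Finset.mem_insert, Finset.mem_singleton] at hx
    rcases hx with rfl | rfl | rfl | rfl <;> simp [*]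
  · rw [Finset.card_insert_of_notMem (by simp [n12, n13, n14]),
      Finset.card_insert_of_notMem (by simp [n23, n24]), Finset.card_pair n34]
  · -- For `r` in the theta, one cycle of the theta avoids `r`, and `D` can be made to avoid `r`.
    have hgen : ∀ r (Z W : Finset α), Z ⊆ A ∪ B → W ⊆ A ∪ B → Ev a b Z → Ev a b W → Z.Nonempty →
        r ∉ Z → r ∈ W → LDep (Ev a b) ((A ∪ B ∪ D).erase r) := by
      intro r Z W hZ hW hZe hWe hZ0 hrZ hrW
      have hD' : ∃ D' ⊆ A ∪ B ∪ D, Ev a b D' ∧ r₄ ∈ D' ∧ r ∉ D' := by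
        by_cases hrD : r ∈ D
        · refine ⟨symmDiff D W, ?_, ev_symmDiff hDev hWe, ?_, ?_⟩
          · intro x hx
            have hWx := @hW x
            simp only [Finset.mem_symmDiff, Finset.mem_union] at hx hWx ⊢
            tauto
          · exact Finset.mem_symmDiff.2 (Or.inl ⟨h4D, fun h => h4T (hW h)⟩)
          · simp [Finset.mem_symmDiff, hrD, hrW]
        · exact ⟨D, Finset.subset_union_right, hDev, h4D, hrD⟩
      obtain ⟨D', hD', hD'e, h4', hr⟩ := hD'
      refine ⟨Z, Finset.subset_erase.2 ⟨hZ.trans Finset.subset_union_left, hrZ⟩, D',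
        Finset.subset_erase.2 ⟨hD', hr⟩, hZ0, ⟨r₄, h4'⟩, ?_, hZe, hD'e⟩
      rintro rfl
      exact h4T (hZ h4')
    have hAT : A ⊆ A ∪ B := Finset.subset_union_left
    have hBT : B ⊆ A ∪ B := Finset.subset_union_right
    have hST : symmDiff A B ⊆ A ∪ B := by
      intro x hx
      simp only [Finset.mem_symmDiff, Finset.mem_union] at hx ⊢
      tauto
    intro r hr
    simp only [Finset.mem_insert, Finset.mem_singleton] at hr
    rcases hr with rfl | rfl | rfl | rfl
    · exact hgen _ B A hBT hAT hB.2.1 hA.2.1 hB.1 h1B h1A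
    · exact hgen _ A B hAT hBT hA.2.1 hB.2.1 hA.1 h2A h2B
    · exact hgen _ (symmDiff A B) A hST hAT hABev hA.2.1
        ⟨r₁, Finset.mem_symmDiff.2 (Or.inl ⟨h1A, h1B⟩)⟩ (by simp [Finset.mem_symmDiff, h3A, h3B]) h3A
    · exact ⟨A, Finset.subset_erase.2 ⟨hAT.trans Finset.subset_union_left, h4.1⟩, B,
        Finset.subset_erase.2 ⟨hBT.trans Finset.subset_union_left, h4.2⟩, hA.1, hB.1, hne,
        hA.2.1, hB.2.1⟩
  · intro r hr s hs hrs
    rintro ⟨F₁, hF₁, F₂, hF₂, h10, h20, hF, h11, h21⟩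
    rw [Finset.subset_erase, Finset.subset_erase] at hF₁ hF₂
    obtain ⟨⟨hF₁, hr₁⟩, hs₁⟩ := hF₁
    obtain ⟨⟨hF₂, hr₂⟩, hs₂⟩ := hF₂
    have hthree : ∀ t, t ∈ ({r₁, r₂, r₃, r₄} : Finset α) → t ≠ r₄ → t = r₁ ∨ t = r₂ ∨ t = r₃ := by
      intro t ht ht4
      simpa [ht4] using ht
    by_cases h44 : r = r₄ ∨ s = r₄
    · -- Both sets lie in the theta, each of whose edges is avoided by only one of its three cycles.
      have c1 := hT F₁ h10 h11 (hin F₁ hF₁ h11 (by rcases h44 with rfl | rfl <;> assumption))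
      have c2 := hT F₂ h20 h21 (hin F₂ hF₂ h21 (by rcases h44 with rfl | rfl <;> assumption))
      have key : ∀ t, t = r₁ ∨ t = r₂ ∨ t = r₃ → t ∉ F₁ → t ∉ F₂ → False := by
        clear hr₁ hs₁ hr₂ hs₂ hr hs
        rintro t ht ht1 ht2
        rcases c1 with rfl | rfl | rfl <;> rcases c2 with rfl | rfl | rfl <;>
          first
          | exact hF rfl
          | rcases ht with rfl | rfl | rfl <;>
              simp [Finset.mem_symmDiff, h1A, h1B, h2A, h2B, h3A, h3B] at ht1 ht2
      rcases h44 with rfl | rfl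
      · exact key s (hthree s hs hrs.symm) hs₁ hs₂
      · exact key r (hthree r hr hrs) hr₁ hr₂
    · -- No nonempty even subset of the theta avoids two of `r₁`, `r₂`, `r₃`.
      push Not at h44
      have key' : ∀ F : Finset α, F.Nonempty → Ev a b F → F ⊆ A ∪ B →
          (r₁ ∈ F ∨ r₂ ∈ F) ∧ (r₁ ∈ F ∨ r₃ ∈ F) ∧ (r₂ ∈ F ∨ r₃ ∈ F) := by
        intro F h0 he hFT
        rcases hT F h0 he hFT with rfl | rfl | rfl <;>
          simp [Finset.mem_symmDiff, h1A, h1B, h2A, h2B, h3A, h3B]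
      have key : ∀ F : Finset α, F.Nonempty → Ev a b F → F ⊆ A ∪ B → r ∉ F → s ∉ F → False := by
        intro F h0 he hFT hrF hsF
        obtain ⟨k1, k2, k3⟩ := key' F h0 he hFT
        rcases hthree r hr h44.1 with rfl | rfl | rfl <;>
          rcases hthree s hs h44.2 with rfl | rfl | rfl <;>
          simp [hrF, hsF] at k1 k2 k3 hrs
      by_cases hT1 : F₁ ⊆ A ∪ B
      · exact key F₁ h10 h11 hT1 hr₁ hs₁
      by_cases hT2 : F₂ ⊆ A ∪ B
      · exact key F₂ h20 h21 hT2 hr₂ hs₂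
      refine key (symmDiff F₁ F₂) ?_ (ev_symmDiff h11 h21) ?_ (by simp [Finset.mem_symmDiff, *])
        (by simp [Finset.mem_symmDiff, *])
      · rw [Finset.nonempty_iff_ne_empty]
        exact fun h => hF (symmDiff_eq_bot.1 h)
      · intro x hx
        have e := Finset.ext_iff.1 ((hout F₁ hF₁ h11 hT1).trans (hout F₂ hF₂ h21 hT2).symm) x
        simp only [Finset.mem_sdiff, Finset.mem_symmDiff] at e hx
        tauto

end Core

/-! ### The minor `U_{2,4} ⊕ U_{0,1}` -/

section Minor

open scoped Classical

variable {V α : Type u}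

/-- `U_{2,4} ⊕ U_{0,1}` is not in the class: two triangles of `U_{2,4}` in a graph would have
a two-element even set as their symmetric difference, and a bicircular lift matroid has
no loops. -/
lemma IsU24PlusLoop.not_inBL {N : Matroid α} (hN : IsU24PlusLoop N) : ¬ InBL N := by
  obtain ⟨X, l, hl, hE, hX, hC⟩ := hN
  have hXfin : X.Finite := Set.finite_of_encard_eq_coe (k := 4) hX
  obtain ⟨X, rfl⟩ := hXfin.exists_finset_coe
  have hcard : X.card = 4 := by
    rw [Set.encard_coe_eq_coe_finsetCard] at hX
    exact_mod_cast hX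
  rw [Rep.inBL_iff]
  rintro (⟨-, V, a, b, h⟩ | ⟨-, V, a, b, h⟩)
  · have htri : ∀ r ∈ X, Ev a b (X.erase r) := by
      intro r hr
      have hcirc : N.IsCircuit ↑(X.erase r) := (hC _).2 (Or.inr ⟨by simp, by
        rw [Set.encard_coe_eq_coe_finsetCard, Finset.card_erase_of_mem hr, hcard]; rfl⟩)
      obtain ⟨A, hA, hA0, hAe⟩ := (h _ hcirc.subset_ground).1 hcirc.dep
      have hAs : (↑A : Set α) ⊆ ↑(X.erase r) := Finset.coe_subset.2 hA
      have hAd : N.Dep ↑A := (h _ (hAs.trans hcirc.subset_ground)).2 ⟨A, subset_rfl, hA0, hAe⟩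
      have := Finset.coe_injective (hcirc.eq_of_dep_subset hAd hAs)
      exact this ▸ hAe
    obtain ⟨r, hr⟩ : X.Nonempty := Finset.card_pos.1 (by omega)
    obtain ⟨s, hs⟩ : (X.erase r).Nonempty := Finset.card_pos.1 (by
      rw [Finset.card_erase_of_mem hr]; omega)
    have hsr := Finset.ne_of_mem_erase hs
    have hs := Finset.mem_of_mem_erase hs
    have hev := ev_symmDiff (htri r hr) (htri s hs)
    have hpair : symmDiff (X.erase r) (X.erase s) = {r, s} := by
      ext x
      simp only [Finset.mem_symmDiff, Finset.mem_erase, Finset.mem_insert, Finset.mem_singleton]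
      by_cases h1 : x = r
      · subst h1; simp [hr, hsr.symm]
      · by_cases h2 : x = s
        · subst h2; simp [hs, hsr]
        · simp [h1, h2]
    rw [hpair] at hev
    have hsub : (↑({r, s} : Finset α) : Set α) ⊆ ↑X := by
      rw [Finset.coe_subset]
      intro x hx
      simp only [Finset.mem_insert, Finset.mem_singleton] at hx
      rcases hx with rfl | rfl <;> assumption
    have hd : N.Dep ↑({r, s} : Finset α) :=
      (h _ (hsub.trans (hE ▸ subset_insert _ _))).2 ⟨_, subset_rfl, ⟨r, by simp⟩, hev⟩
    obtain ⟨C, hCs, hCc⟩ := hd.exists_isCircuit_subset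
    rcases (hC C).1 hCc with rfl | ⟨-, h3⟩
    · exact hl (hsub (hCs rfl))
    · have := encard_le_encard hCs
      rw [h3, Set.encard_coe_eq_coe_finsetCard] at this
      have h2 : ({r, s} : Finset α).card ≤ 2 := Finset.card_le_two
      have h3 : 3 ≤ ({r, s} : Finset α).card := by exact_mod_cast this
      omega
  · have hcirc : N.IsCircuit {l} := (hC _).2 (Or.inl rfl)
    have hd : N.Dep ↑({l} : Finset α) := by simpa using hcirc.dep
    obtain ⟨A, hA, B, hB, hA0, hB0, hne, -⟩ := (h _ hd.subset_ground).1 hd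
    exact hne (((Finset.subset_singleton_iff.1 hA).resolve_left hA0.ne_empty).trans
      ((Finset.subset_singleton_iff.1 hB).resolve_left hB0.ne_empty).symm)

lemma isU24PlusLoop_of_dep {N : Matroid α} {R : Set α} {l : α} (hl : l ∉ R)
    (hE : N.E = insert l R) (hR : R.encard = 4)
    (h : ∀ J ⊆ insert l R, N.Dep J ↔ l ∈ J ∨ 3 ≤ (J ∩ R).encard) : IsU24PlusLoop N := by
  refine ⟨R, l, hl, hE, hR, fun C => ?_⟩
  change N.IsCircuit C ↔ _
  have hlE : {l} ⊆ insert l R := by simp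
  constructor
  · intro hC
    have hCE : C ⊆ insert l R := hE ▸ hC.subset_ground
    have hd := (h C hCE).1 hC.dep
    by_cases hlC : l ∈ C
    · exact Or.inl (hC.eq_of_dep_subset ((h _ hlE).2 (Or.inl rfl)) (by simpa using hlC)).symm
    · have hCR : C ⊆ R := fun x hx => (hCE hx).resolve_left fun h => hlC (h ▸ hx)
      have h3 := hd.resolve_left hlC
      rw [inter_eq_self_of_subset_left hCR] at h3
      obtain ⟨S, hS, hS3⟩ := exists_subset_encard_eq h3
      have hSR := hS.trans hCR
      have hSd : N.Dep S := (h S (hS.trans hCE)).2 (Or.inr (by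
        rw [inter_eq_self_of_subset_left hSR, hS3]))
      have := hC.eq_of_dep_subset hSd hS
      exact Or.inr ⟨hCR, this ▸ hS3⟩
  · rintro (rfl | ⟨hCR, h3⟩)
    · rw [isCircuit_iff]
      refine ⟨(h _ hlE).2 (Or.inl rfl), fun J hJ hJl => ?_⟩
      exact (subset_singleton_iff_eq.1 hJl).resolve_left hJ.nonempty.ne_empty
    · rw [isCircuit_iff]
      have hCE := hCR.trans (subset_insert l R)
      refine ⟨(h _ hCE).2 (Or.inr ?_), fun J hJ hJC => ?_⟩
      · rw [inter_eq_self_of_subset_left hCR, h3]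
      · have h4 := ((h J (hJC.trans hCE)).1 hJ).resolve_left (fun h => hl (hCR (hJC h)))
        have hfin : C.Finite := Set.finite_of_encard_eq_coe (k := 3) h3
        refine (hfin.subset hJC).eq_of_subset_of_encard_le hJC ?_
        rw [h3]
        exact h4.trans (encard_le_encard inter_subset_left)

/-- A four-element set as provided by `exists_core` on one side of a 1-separation and a circuit
on the other side yield a `U_{2,4} ⊕ U_{0,1}`-minor. -/
lemma exists_minor {M : Matroid α} (hfin : M.E.Finite) {X Y : Set α} (hsep : IsKSep M 1 X Y)
    {X₀ R : Finset α} (hX₀ : (↑X₀ : Set α) ⊆ X) (hR : R ⊆ X₀) (hR4 : R.card = 4)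
    (hdep : ∀ r ∈ R, M.Dep ↑(X₀.erase r))
    (hind : ∀ r ∈ R, ∀ s ∈ R, r ≠ s → M.Indep ↑((X₀.erase r).erase s))
    {C : Set α} (hC : M.IsCircuit C) (hCY : C ⊆ Y) {l : α} (hl : l ∈ C) :
    ∃ N, IsMinor N M ∧ IsU24PlusLoop N := by
  have hXE : X ⊆ M.E := hsep.1 ▸ subset_union_left
  have hYE : Y ⊆ M.E := hsep.1 ▸ subset_union_right
  have hdisj : ∀ x, x ∈ X → x ∉ Y := fun x h => Set.disjoint_left.1 hsep.2.1 h
  have hRX : ∀ x ∈ R, x ∈ X := fun x hx => hX₀ (hR hx)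
  have hlX : l ∉ X := fun h => hdisj l h (hCY hl)
  have hlR : l ∉ R := fun h => hlX (hRX l h)
  set K : Set α := ↑(X₀ \ R) ∪ C \ {l} with hK
  have hCl : M.Indep (C \ {l}) := hC.sdiff_singleton_indep hl
  -- The set `K` together with any two elements of `R` is still independent.
  have hbig : ∀ r ∈ R, ∀ s ∈ R, r ≠ s → M.Indep (↑((X₀.erase r).erase s) ∪ C \ {l}) := by
    intro r hr s hs hrs
    refine hsep.indep_union hfin (hind r hr s hs hrs) ?_ hCl (sdiff_subset.trans hCY)
    intro x hx
    exact hX₀ (Finset.mem_of_mem_erase (Finset.mem_of_mem_erase hx))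
  obtain ⟨r, hr, s, hs, hrs⟩ := Finset.one_lt_card.1 (by omega : 1 < R.card)
  have hKi : M.Indep K := by
    refine (hbig r hr s hs hrs).subset (union_subset_union_left _ ?_)
    rw [Finset.coe_subset]
    intro x hx
    rw [Finset.mem_sdiff] at hx
    exact Finset.mem_erase.2 ⟨fun h => hx.2 (h ▸ hs),
      Finset.mem_erase.2 ⟨fun h => hx.2 (h ▸ hr), hx.1⟩⟩
  have hRE : insert l (↑R : Set α) ⊆ M.E :=
    insert_subset (hC.subset_ground hl) fun x hx => hXE (hRX x hx)
  have hRK : Disjoint (insert l (↑R : Set α)) K := by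
    rw [Set.disjoint_left]
    rintro x (rfl | hx) (hx' | hx')
    · exact hlX (hX₀ (Finset.mem_sdiff.1 hx').1)
    · exact hx'.2 rfl
    · exact (Finset.mem_sdiff.1 hx').2 hx
    · exact hdisj x (hRX x hx) (hCY hx'.1)
  refine ⟨_, ⟨K, M.E \ insert l ↑R, rfl⟩, ?_⟩
  change IsU24PlusLoop ((M ／ K) ＼ (M.E \ insert l ↑R))
  refine isU24PlusLoop_of_dep (R := ↑R) (l := l) hlR ?_ ?_ fun J hJ => ?_
  · rw [delete_ground, contract_ground]
    ext x
    have h1 := @hRE x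
    have h2 : x ∈ insert l (↑R : Set α) → x ∉ K := fun h => Set.disjoint_left.1 hRK h
    rw [Set.mem_sdiff, Set.mem_sdiff, Set.mem_sdiff]
    exact ⟨fun h => by_contra fun hx => h.2 ⟨h.1.1, hx⟩, fun h => ⟨⟨h1 h, h2 h⟩, fun h' => h'.2 h⟩⟩
  · rw [Set.encard_coe_eq_coe_finsetCard, hR4]; rfl
  · have hJK : J ∪ K ⊆ M.E := union_subset (hJ.trans hRE) hKi.subset_ground
    have h1 : ((M ／ K) ＼ (M.E \ insert l ↑R)).Dep J ↔ M.Dep (J ∪ K) := by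
      rw [delete_dep_iff, hKi.contract_dep_iff]
      refine ⟨fun h => h.1.2, fun h => ⟨⟨hRK.mono_left hJ, h⟩, ?_⟩⟩
      exact disjoint_sdiff_right.mono_left hJ
    rw [h1]
    have hsum : ((↑R : Set α) \ J).encard + (J ∩ ↑R).encard = 4 := by
      rw [inter_comm, encard_sdiff_add_encard_inter, Set.encard_coe_eq_coe_finsetCard, hR4]; rfl
    constructor
    · intro hd
      by_contra hcon
      push Not at hcon
      obtain ⟨hlJ, hlt⟩ := hcon
      have h2 : 1 < ((↑R : Set α) \ J).encard := by
        by_contra hle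
        have hle : ((↑R : Set α) \ J).encard ≤ 1 := not_lt.1 hle
        have hle2 : (J ∩ ↑R).encard ≤ 2 := by
          have : (J ∩ ↑R).encard < 2 + 1 := hlt
          exact Order.le_of_lt_add_one this
        have := add_le_add hle hle2
        rw [hsum] at this
        exact absurd this (by decide)
      obtain ⟨r, s, hr, hs, hrs⟩ := one_lt_encard_iff.1 h2
      refine hd.not_indep ((hbig r hr.1 s hs.1 hrs).subset ?_)
      rw [hK, ← union_assoc]
      refine union_subset_union_left _ ?_
      rintro x (hx | hx)
      · have hxR : x ∈ R := (hJ hx).resolve_left fun h => hlJ (h ▸ hx)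
        exact Finset.mem_erase.2 ⟨fun h => hs.2 (h ▸ hx),
          Finset.mem_erase.2 ⟨fun h => hr.2 (h ▸ hx), hR hxR⟩⟩
      · have hx := Finset.mem_sdiff.1 hx
        exact Finset.mem_erase.2 ⟨fun h => hx.2 (h ▸ hs.1),
          Finset.mem_erase.2 ⟨fun h => hx.2 (h ▸ hr.1), hx.1⟩⟩
    · rintro (hlJ | h3)
      · refine hC.dep.superset (fun x hx => ?_) hJK
        by_cases hxl : x = l
        · exact Or.inl (hxl ▸ hlJ)
        · exact Or.inr (Or.inr ⟨hx, hxl⟩)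
      · have h4 : ((↑R : Set α) \ J).encard ≤ 1 := by
          by_contra hle
          have hle : 1 + 1 ≤ ((↑R : Set α) \ J).encard := Order.add_one_le_of_lt (not_le.1 hle)
          have := add_le_add hle h3
          rw [hsum] at this
          exact absurd this (by decide)
        have h5 : ∃ t ∈ R, (↑R : Set α) \ J ⊆ {t} := by
          rcases encard_le_one_iff_eq.1 h4 with h | ⟨t, h⟩
          · exact ⟨r, hr, by simp [h]⟩
          · exact ⟨t, (h.symm ▸ rfl : t ∈ (↑R : Set α) \ J).1, h.subset⟩
        obtain ⟨t, ht, hsub⟩ := h5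
        refine (hdep t ht).superset (fun x hx => ?_) hJK
        obtain ⟨hxt, hx⟩ := Finset.mem_erase.1 hx
        by_cases hxR : x ∈ R
        · left
          by_contra hxJ
          exact hxt (hsub ⟨hxR, hxJ⟩)
        · exact Or.inr (Or.inl (Finset.mem_sdiff.2 ⟨hx, hxR⟩))

lemma isU24PlusLoop_of_sep {M : Matroid α} (hM : ExcludedMinorBL M) {X Y : Set α}
    (hsep : IsKSep M 1 X Y) (hX : ¬ Rep GDep (M ↾ X)) : IsU24PlusLoop M := by
  have hfin := hM.finite
  have hXE : X ⊆ M.E := hsep.1 ▸ subset_union_left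
  have hYE : Y ⊆ M.E := hsep.1 ▸ subset_union_right
  have hXss : X ⊂ M.E := by
    refine ssubset_of_subset_of_ne hXE ?_
    rintro rfl
    have hY0 : Y = ∅ := by
      rw [← inter_eq_self_of_subset_left hYE, inter_comm]
      exact hsep.2.1.inter_eq
    have := hsep.2.2.2.1
    rw [hY0] at this
    simp at this
  have hL : Rep LDep (M ↾ X) :=
    ((Rep.inBL_iff _).1 (hM.2 _ (isStrictMinor_restrict hXss))).resolve_left hX
  have hYd : M.Dep Y := by
    rw [← not_indep_iff hYE]
    intro hYi
    exact hM.1 ((Rep.inBL_iff M).2 (Or.inr (rep_lDep_of_sep hfin hsep hL hYi)))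
  obtain ⟨C, hCY, hC⟩ := hYd.exists_isCircuit_subset
  obtain ⟨l, hl⟩ := hC.nonempty
  obtain ⟨E, rfl⟩ := (hfin.subset hXE).exists_finset_coe
  obtain ⟨V, a, b, hab⟩ := hL.dep hXE
  have hn : ¬ ∃ (W : Type u) (a' b' : α → W), ∀ C ⊆ E, LDep (Ev a b) C ↔ GDep (Ev a' b') C := by
    rintro ⟨W, a', b', h⟩
    refine hX ⟨finCirc_of_finite E.finite_toSet, W, a', b', fun C hC => ?_⟩
    have hC : (↑C : Set α) ⊆ ↑E := hC
    rw [← h C (Finset.coe_subset.1 hC), ← hab C hC, restrict_dep_iff, Dep]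
    simp [hC, hC.trans hXE]
  obtain ⟨X₀, hX₀, R, hR, hR4, h1, h2⟩ := exists_core hn
  have hsub : ∀ F : Finset α, F ⊆ X₀ → (↑F : Set α) ⊆ ↑E := fun F hF =>
    Finset.coe_subset.2 (hF.trans hX₀)
  obtain ⟨N, hNM, hN⟩ := exists_minor hfin hsep (hsub X₀ subset_rfl) hR hR4
    (fun r hr => (hab _ (hsub _ (Finset.erase_subset _ _))).2 (h1 r hr))
    (fun r hr s hs hrs => by
      have hs' := hsub ((X₀.erase r).erase s)
        ((Finset.erase_subset _ _).trans (Finset.erase_subset _ _))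
      rw [← not_dep_iff (hs'.trans hXE), hab _ hs']
      exact h2 r hr s hs hrs) hC hCY hl
  by_cases hne : N = M
  · exact hne ▸ hN
  · exact absurd (hM.2 N ⟨hNM, hne⟩) hN.not_inBL

end Minor

theorem statement_6 {α : Type u} (M : Matroid α) (hM : ExcludedMinorBL M) :
    MConnected M ∨ IsU24PlusLoop M := by
  by_cases hconn : MConnected M
  · exact Or.inl hconn
  right
  obtain ⟨X, Y, hsep⟩ := not_not.1 hconn
  by_cases hX : Rep GDep (M ↾ X)
  · by_cases hY : Rep GDep (M ↾ Y)
    · exact absurd ((Rep.inBL_iff M).2 (Or.inl (rep_gDep_of_sep hM.finite hsep hX hY))) hM.1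
    · exact isU24PlusLoop_of_sep hM hsep.symm hY
  · exact isU24PlusLoop_of_sep hM hsep hX

end BLFormal
end
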